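/- Let δ > 0 and let u ∈ C²(S² ∩ B_δ(S) \ {S}) be a (−1)-homogeneous axisymmetric solution of the stationary Navier–Stokes equations. Then the limit τ := lim_{x∈S², x→S} |x'| u_θ(x) exists and is finite, and limsup_{x∈S², x→S} |u(x)| · |x'|² (ln|x'|)² < ∞, i.e. |u| = O(1/(|x'| ln|x'|)²) near S on S². -/

import Mathlib

noncomputable section

open Real Filter MeasureTheory Metric Topology
open scoped ENNReal InnerProductSpace

abbrev V3 := EuclideanSpace ℝ (Fin 3)
abbrev V2 := EuclideanSpace ℝ (Fin 2)

/-- standard basis vector in `ℝ³` -/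
def e3 (j : Fin 3) : V3 := EuclideanSpace.single j 1

/-- partial derivative `∂_j f` -/
def pd (j : Fin 3) (f : V3 → ℝ) (x : V3) : ℝ := fderiv ℝ f x (e3 j)

/-- Laplacian on `ℝ³` -/
def lap3 (f : V3 → ℝ) (x : V3) : ℝ := ∑ j, pd j (fun y => pd j f y) x

/-- stationary Navier–Stokes equations `-Δu + (u·∇)u + ∇p = 0`, `div u = 0` at `x` -/
def NSEq (u : V3 → V3) (p : V3 → ℝ) (x : V3) : Prop :=
  (∀ i, - lap3 (fun z => u z i) x + (∑ j, u x j * pd j (fun z => u z i) x) + pd i p x = 0)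
  ∧ (∑ j, pd j (fun z => u z j) x) = 0

/-- stationary Euler equations `(u·∇)u + ∇p = 0`, `div u = 0` at `x` -/
def EulerEq (u : V3 → V3) (p : V3 → ℝ) (x : V3) : Prop :=
  (∀ i, (∑ j, u x j * pd j (fun z => u z i) x) + pd i p x = 0)
  ∧ (∑ j, pd j (fun z => u z j) x) = 0

/-- south pole -/
def S3 : V3 := EuclideanSpace.single 2 (-1)
/-- north pole -/
def N3 : V3 := EuclideanSpace.single 2 1

/-- the unit sphere `S²` -/
def sphere2 : Set V3 := Metric.sphere (0 : V3) 1

/-- the open cone over a subset of the unit sphere -/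
def cone3 (Ω : Set V3) : Set V3 := {x : V3 | x ≠ 0 ∧ (‖x‖⁻¹ • x) ∈ Ω}

/-- `|x'| = √(x₁² + x₂²)` -/
def rho (x : V3) : ℝ := Real.sqrt ((x 0) ^ 2 + (x 1) ^ 2)

/-- the `x₃`-axis `{x' = 0}` -/
def axis3 : Set V3 := {x : V3 | x 0 = 0 ∧ x 1 = 0}

/-- `Ω_{a,b,R} = {a < x₃ < b, |x'| < R}` -/
def OmegaR (a b R : ℝ) : Set V3 := {x : V3 | a < x 2 ∧ x 2 < b ∧ rho x < R}

/-- build a point of `ℝ³` from `x' ∈ ℝ²` and `x₃ ∈ ℝ` -/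
def emb (y : V2) (t : ℝ) : V3 := (EuclideanSpace.equiv (Fin 3) ℝ).symm ![y 0, y 1, t]

/-- spherical component `u_r = u · e_r` -/
def uRc (u : V3 → V3) (x : V3) : ℝ := (u x 0 * x 0 + u x 1 * x 1 + u x 2 * x 2) / ‖x‖

/-- spherical component `u_θ = u · e_θ` -/
def uTc (u : V3 → V3) (x : V3) : ℝ :=
  (u x 0 * x 0 * x 2 + u x 1 * x 1 * x 2) / (‖x‖ * rho x) - u x 2 * rho x / ‖x‖

/-- spherical component `u_φ = u · e_φ` -/
def uPc (u : V3 → V3) (x : V3) : ℝ := (-(u x 0) * x 1 + u x 1 * x 0) / rho x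

/-- axisymmetry on a set: the spherical components are independent of the meridian angle -/
def AxisymOn (u : V3 → V3) (Ω : Set V3) : Prop :=
  ∀ x ∈ Ω, ∀ y ∈ Ω, ‖x‖ = ‖y‖ → x 2 = y 2 →
    uRc u x = uRc u y ∧ uTc u x = uTc u y ∧ uPc u x = uPc u y

/-- spherical frame vector `e_r` -/
def eRv (x : V3) : V3 := ‖x‖⁻¹ • x

/-- spherical frame vector `e_θ` -/
def eThv (x : V3) : V3 := (EuclideanSpace.equiv (Fin 3) ℝ).symm
  ![x 2 * x 0 / (‖x‖ * rho x), x 2 * x 1 / (‖x‖ * rho x), -(rho x) / ‖x‖]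

/-- spherical frame vector `e_φ` -/
def ePhv (x : V3) : V3 := (EuclideanSpace.equiv (Fin 3) ℝ).symm ![-(x 1) / rho x, x 0 / rho x, 0]

/-- the spherical cap `S² ∩ B_δ(S) \ {S}` -/
def NSCap (δ : ℝ) : Set V3 := (sphere2 ∩ Metric.ball S3 δ) \ {S3}

/-- the spherical cap `S² ∩ B_δ(S)` -/
def NSCapFull (δ : ℝ) : Set V3 := sphere2 ∩ Metric.ball S3 δ

/-!
By axisymmetry and homogeneity, `u` is determined by functions of `cos θ`. In terms of the variable
`t = artanh (-cos θ)`, which tends to `∞` at the south pole and satisfies `sin θ = 1 / cosh t`, the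
Navier–Stokes equations for `U = sin θ u_θ` and `W = sin θ u_φ` become
```
U' = U ^ 2 / 2 - 2 tanh t U - L,  L' = -K / cosh² t,  K' = P / cosh² t,  P' = -2 W Z,
W' = -Z / cosh² t,                Z' = U Z.
```
The sign of `Z` is constant, so that for large `t` either `W Z ≥ 0` or, up to replacing `(W, Z)` by
`(-W, -Z)`, `W < 0 < Z`. In the first case `W` is bounded and `K / cosh² t` decays exponentially. In
the second one `L` converges, for otherwise the Riccati equation would make `U` blow up; hence `U`
has a limit `τ`. If `τ` were at least `3`, then `Z`, `-W`, `P` and `K` would grow at the exponential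
rates `3`, `1`, `4` and `2`, and `L` would diverge; and `τ < 3` makes `K / cosh² t` decay
exponentially.

In both cases `L - (τ ^ 2 / 2 - 2 τ)` is exponentially small, so that `V = U - τ` solves
`V' = (τ - 2) V + V ^ 2 / 2` up to exponentially small terms. As `V → 0`, this forces
`V' = O(t⁻²)`: in the neutral case `τ = 2` because `V = O(t⁻¹)`, and otherwise because `V` itself is
`O(t⁻²)`. Finally `U' = -sin² θ u_r`, `t ∼ -log (sin θ)`, and the other two components of `u` are
exponentially smaller.
-/

namespace ConicalNS

section CalculusAtInfinity

open Set Asymptotics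

variable {f f' : ℝ → ℝ} {T : ℝ}

lemma monotoneOn_Ici_of_hasDerivAt (hf : ∀ t ≥ T, HasDerivAt f (f' t) t)
    (hf' : ∀ t ≥ T, 0 ≤ f' t) : MonotoneOn f (Ici T) := by
  refine monotoneOn_of_hasDerivWithinAt_nonneg (f' := f') (convex_Ici T)
    (fun t ht ↦ (hf t ht).continuousAt.continuousWithinAt) (fun t ht ↦ ?_) (fun t ht ↦ ?_)
  · exact (hf t (interior_subset ht)).hasDerivWithinAt
  · exact hf' t (interior_subset ht)

lemma antitoneOn_Ici_of_hasDerivAt (hf : ∀ t ≥ T, HasDerivAt f (f' t) t)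
    (hf' : ∀ t ≥ T, f' t ≤ 0) : AntitoneOn f (Ici T) := by
  refine antitoneOn_of_hasDerivWithinAt_nonpos (f' := f') (convex_Ici T)
    (fun t ht ↦ (hf t ht).continuousAt.continuousWithinAt) (fun t ht ↦ ?_) (fun t ht ↦ ?_)
  · exact (hf t (interior_subset ht)).hasDerivWithinAt
  · exact hf' t (interior_subset ht)

lemma exists_tendsto_of_antitoneOn_Ici {m : ℝ} (hf : AntitoneOn f (Ici T))
    (hm : ∀ t ≥ T, m ≤ f t) : ∃ l, Tendsto f atTop (𝓝 l) ∧ ∀ t ≥ T, l ≤ f t := by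
  have anti : Antitone fun t ↦ f (max t T) := fun s t hst ↦
    hf (le_max_right s T) (le_max_right t T) (max_le_max_right T hst)
  have bdd : BddBelow (range fun t ↦ f (max t T)) :=
    ⟨m, forall_mem_range.2 fun t ↦ hm _ (le_max_right t T)⟩
  refine ⟨_, (tendsto_atTop_ciInf anti bdd).congr' ?_, fun t ht ↦ ?_⟩
  · filter_upwards [eventually_ge_atTop T] with t ht
    rw [max_eq_left ht]
  · simpa only [max_eq_left ht] using ciInf_le bdd t

/-! ### Barriers -/

lemma le_const_of_hasDerivAt_neg {b : ℝ} (hf : ∀ t ≥ T, HasDerivAt f (f' t) t) (h0 : f T ≤ b)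
    (hb : ∀ t ≥ T, f t = b → f' t < 0) : ∀ t ≥ T, f t ≤ b := fun t ht ↦
  image_le_of_deriv_right_lt_deriv_boundary' (b := t) (B := fun _ ↦ b) (B' := fun _ ↦ 0)
    (fun s hs ↦ (hf s hs.1).continuousAt.continuousWithinAt)
    (fun s hs ↦ (hf s hs.1).hasDerivWithinAt) h0 continuousOn_const
    (fun _ _ ↦ hasDerivWithinAt_const ..) (fun s hs ↦ hb s hs.1) ⟨ht, le_rfl⟩

lemma const_le_of_hasDerivAt_pos {b : ℝ} (hf : ∀ t ≥ T, HasDerivAt f (f' t) t) (h0 : b ≤ f T)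
    (hb : ∀ t ≥ T, f t = b → 0 < f' t) : ∀ t ≥ T, b ≤ f t := by
  simpa using le_const_of_hasDerivAt_neg (b := -b) (fun t ht ↦ (hf t ht).neg) (by simpa using h0)
    (fun t ht he ↦ neg_lt_zero.2 (hb t ht (neg_injective he)))

-- Once above `B`, the function `f` would stay above its value there and miss its limit.
lemma le_of_tendsto_of_hasDerivAt_pos {B : ℝ → ℝ} {l : ℝ}
    (hf : ∀ t ≥ T, HasDerivAt f (f' t) t) (hl : Tendsto f atTop (𝓝 l)) (hB : AntitoneOn B (Ici T))
    (hlB : ∀ t ≥ T, l ≤ B t) (hpos : ∀ t ≥ T, B t < f t → 0 < f' t) : ∀ t ≥ T, f t ≤ B t := by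
  intro s hs
  by_contra! hlt
  have above : ∀ t ≥ s, f s ≤ f t :=
    const_le_of_hasDerivAt_pos (fun t ht ↦ hf t (hs.trans ht)) le_rfl fun t ht he ↦
      hpos t (hs.trans ht) (((hB hs (hs.trans ht) ht).trans_lt hlt).trans_eq he.symm)
  have := ge_of_tendsto hl ((eventually_ge_atTop s).mono above)
  linarith [hlB s hs]

/-! ### Integrating derivative bounds -/

lemma norm_sub_le_sub_of_norm_deriv_le {E : Type*} [NormedAddCommGroup E] [NormedSpace ℝ E]
    {f f' : ℝ → E} {g g' : ℝ → ℝ} (hf : ∀ t ≥ T, HasDerivAt f (f' t) t)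
    (hg : ∀ t ≥ T, HasDerivAt g (g' t) t) (hle : ∀ t ≥ T, ‖f' t‖ ≤ g' t) {s t : ℝ}
    (hs : T ≤ s) (hst : s ≤ t) : ‖f t - f s‖ ≤ g t - g s := by
  refine image_norm_le_of_norm_deriv_right_le_deriv_boundary' (f := fun r ↦ f r - f s) (f' := f')
    (B := fun r ↦ g r - g s) (B' := g') ?_ ?_ (by simp) ?_ ?_ ?_ (right_mem_Icc.2 hst)
  · exact fun r hr ↦ ((hf r (hs.trans hr.1)).sub_const _).continuousAt.continuousWithinAt
  · exact fun r hr ↦ ((hf r (hs.trans hr.1)).sub_const _).hasDerivWithinAt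
  · exact fun r hr ↦ ((hg r (hs.trans hr.1)).sub_const _).continuousAt.continuousWithinAt
  · exact fun r hr ↦ ((hg r (hs.trans hr.1)).sub_const _).hasDerivWithinAt
  · exact fun r hr ↦ hle r (hs.trans hr.1)

lemma hasDerivAt_const_mul_exp (C a t : ℝ) :
    HasDerivAt (fun t ↦ C * exp (a * t)) (C * a * exp (a * t)) t :=
  (((hasDerivAt_id t).const_mul a).exp.const_mul C).congr_deriv (by simp only [id]; ring)

lemma tendsto_exp_mul_atTop_nhds_zero {a : ℝ} (ha : a < 0) :
    Tendsto (fun t ↦ exp (a * t)) atTop (𝓝 0) :=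
  tendsto_exp_atBot.comp (tendsto_id.const_mul_atTop_of_neg ha)

section ExponentialBounds

variable {E : Type*} [NormedAddCommGroup E] [NormedSpace ℝ E] {f f' : ℝ → E} {a : ℝ}

lemma eventually_norm_sub_le_of_deriv_isBigO_exp (ha : a ≠ 0)
    (hf : ∀ᶠ t in atTop, HasDerivAt f (f' t) t) (hO : f' =O[atTop] fun t ↦ exp (a * t)) :
    ∃ C T, ∀ s ≥ T, ∀ t ≥ s, ‖f t - f s‖ ≤ C * (exp (a * t) - exp (a * s)) := by
  obtain ⟨C, hC⟩ := hO.bound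
  obtain ⟨T, hT⟩ := eventually_atTop.1 (hf.and hC)
  refine ⟨C / a, T, fun s hs t hst ↦ ?_⟩
  rw [mul_sub]
  refine norm_sub_le_sub_of_norm_deriv_le (fun t ht ↦ (hT t ht).1)
    (fun t _ ↦ hasDerivAt_const_mul_exp (C / a) a t) (fun t ht ↦ ?_) hs hst
  simpa [div_mul_cancel₀ C ha] using (hT t ht).2

omit [NormedSpace ℝ E] in
lemma isBigO_const_exp (ha : 0 < a) (c : E) :
    (fun _ : ℝ ↦ c) =O[atTop] fun t ↦ exp (a * t) :=
  (isLittleO_const_left.2 <| .inr <| tendsto_norm_atTop_atTop.comp <|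
    tendsto_exp_atTop.comp <| tendsto_id.const_mul_atTop ha).isBigO

lemma isBigO_exp_of_deriv_isBigO_exp (ha : 0 < a) (hf : ∀ᶠ t in atTop, HasDerivAt f (f' t) t)
    (hO : f' =O[atTop] fun t ↦ exp (a * t)) : f =O[atTop] fun t ↦ exp (a * t) := by
  obtain ⟨C, T, h⟩ := eventually_norm_sub_le_of_deriv_isBigO_exp ha.ne' hf hO
  have hdiff : (fun t ↦ f t - f T) =O[atTop] fun t ↦ C * (exp (a * t) - exp (a * T)) :=
    .of_norm_eventuallyLE <| (eventually_ge_atTop T).mono fun t ht ↦ h T le_rfl t ht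
  simpa using (hdiff.trans (((isBigO_refl _ _).sub (isBigO_const_exp ha _)).const_mul_left C)).add
    (isBigO_const_exp ha (f T))

lemma exists_tendsto_of_deriv_isBigO_exp [CompleteSpace E] (ha : a < 0)
    (hf : ∀ᶠ t in atTop, HasDerivAt f (f' t) t) (hO : f' =O[atTop] fun t ↦ exp (a * t)) :
    ∃ l, Tendsto f atTop (𝓝 l) ∧ (fun t ↦ f t - l) =O[atTop] fun t ↦ exp (a * t) := by
  obtain ⟨C, T, h⟩ := eventually_norm_sub_le_of_deriv_isBigO_exp ha.ne hf hO
  have hle : ∀ s ≥ T, ∀ t ≥ s, ‖f t - f s‖ ≤ |C| * exp (a * s) := fun s hs t ht ↦ by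
    have hexp : exp (a * t) ≤ exp (a * s) := exp_le_exp.2 (by nlinarith)
    calc ‖f t - f s‖ ≤ C * (exp (a * t) - exp (a * s)) := h s hs t ht
      _ ≤ |C| * (exp (a * s) - exp (a * t)) := by nlinarith [neg_abs_le C]
      _ ≤ |C| * exp (a * s) := by gcongr; linarith [exp_pos (a * t)]
  have hsmall : Tendsto (fun s ↦ |C| * exp (a * s)) atTop (𝓝 0) := by
    simpa using (tendsto_exp_mul_atTop_nhds_zero ha).const_mul |C|
  have hcauchy : CauchySeq f := Metric.cauchySeq_iff'.2 fun ε hε ↦ by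
    obtain ⟨s, hs, hsε⟩ := ((eventually_ge_atTop T).and (hsmall.eventually_lt_const hε)).exists
    exact ⟨s, fun t ht ↦ (dist_eq_norm (f t) (f s)).trans_lt ((hle s hs t ht).trans_lt hsε)⟩
  obtain ⟨l, hl⟩ := cauchySeq_tendsto_of_complete hcauchy
  refine ⟨l, hl, .of_bound |C| ?_⟩
  filter_upwards [eventually_ge_atTop T] with s hs
  rw [norm_sub_rev, norm_of_nonneg (exp_pos _).le]
  exact le_of_tendsto (hl.sub_const (f s)).norm ((eventually_ge_atTop s).mono (hle s hs))

end ExponentialBounds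

lemma eq_zero_of_tendsto_of_tendsto_deriv {l c : ℝ} (hf : ∀ᶠ t in atTop, HasDerivAt f (f' t) t)
    (hl : Tendsto f atTop (𝓝 l)) (hc : Tendsto f' atTop (𝓝 c)) : c = 0 := by
  obtain ⟨T, hT⟩ := eventually_atTop.1 hf
  have mvt (t : ℝ) : ∃ s ≥ t, t ≥ T → f' s = f (t + 1) - f t := by
    by_cases ht : t ≥ T
    · obtain ⟨s, hs, he⟩ := exists_hasDerivAt_eq_slope f f' (lt_add_one t)
        (fun r hr ↦ (hT r (ht.trans hr.1)).continuousAt.continuousWithinAt)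
        (fun r hr ↦ hT r (ht.trans hr.1.le))
      exact ⟨s, hs.1.le, fun _ ↦ by simpa using he⟩
    · exact ⟨t, le_rfl, fun h ↦ absurd h ht⟩
  choose s hs he using mvt
  have hcs : Tendsto (fun t ↦ f' (s t)) atTop (𝓝 c) :=
    hc.comp (tendsto_atTop_mono hs tendsto_id)
  have hzero : Tendsto (fun t ↦ f (t + 1) - f t) atTop (𝓝 0) := by
    simpa using (hl.comp (tendsto_atTop_add_const_right _ 1 tendsto_id)).sub hl
  refine tendsto_nhds_unique (hcs.congr' ?_) hzero
  filter_upwards [eventually_ge_atTop T] with t ht using he t ht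

/-! ### Exponential growth from below -/

/-- `GrowsExp a f` says that `f` is eventually bounded below by a positive multiple of
`t ↦ exp (a * t)`: the one-sided counterpart, with sign, of `f =O[atTop] fun t ↦ exp (a * t)`. -/
def GrowsExp (a : ℝ) (f : ℝ → ℝ) : Prop :=
  ∃ c > 0, ∀ᶠ t in atTop, c * exp (a * t) ≤ f t

namespace GrowsExp

variable {g : ℝ → ℝ} {a b : ℝ}

lemma mono (hf : GrowsExp a f) (hfg : ∀ᶠ t in atTop, f t ≤ g t) : GrowsExp a g := by
  obtain ⟨c, hc, h⟩ := hf
  exact ⟨c, hc, (h.and hfg).mono fun t ht ↦ ht.1.trans ht.2⟩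

lemma const_mul {C : ℝ} (hC : 0 < C) (hf : GrowsExp a f) : GrowsExp a fun t ↦ C * f t := by
  obtain ⟨c, hc, h⟩ := hf
  refine ⟨C * c, mul_pos hC hc, h.mono fun t ht ↦ ?_⟩
  rw [mul_assoc]
  exact mul_le_mul_of_nonneg_left ht hC.le

lemma of_le (hba : b ≤ a) (hf : GrowsExp a f) : GrowsExp b f := by
  obtain ⟨c, hc, h⟩ := hf
  refine ⟨c, hc, (h.and (eventually_ge_atTop 0)).mono fun t ht ↦ le_trans ?_ ht.1⟩
  gcongr
  exact ht.2

lemma mul (hf : GrowsExp a f) (hg : GrowsExp b g) : GrowsExp (a + b) fun t ↦ f t * g t := by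
  obtain ⟨c, hc, hcf⟩ := hf
  obtain ⟨d, hd, hdg⟩ := hg
  refine ⟨c * d, mul_pos hc hd, (hcf.and hdg).mono fun t ht ↦ ?_⟩
  rw [add_mul, exp_add, mul_mul_mul_comm]
  exact mul_le_mul ht.1 ht.2 (by positivity) (le_trans (by positivity) ht.1)

lemma tendsto_atTop_of_deriv (hf : ∀ᶠ t in atTop, HasDerivAt f (f' t) t)
    (hf' : GrowsExp 0 f') : Tendsto f atTop atTop := by
  obtain ⟨c, hc, h⟩ := hf'
  obtain ⟨T, hT⟩ := eventually_atTop.1 (hf.and h)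
  have mono : MonotoneOn (fun t ↦ f t - c * t) (Ici T) :=
    monotoneOn_Ici_of_hasDerivAt
      (fun t ht ↦ (hT t ht).1.sub ((hasDerivAt_id t).const_mul c)) fun t ht ↦ by
        simpa using (hT t ht).2
  have linear : Tendsto (fun t ↦ c * t + (f T - c * T)) atTop atTop :=
    tendsto_atTop_add_const_right _ _ (tendsto_id.const_mul_atTop hc)
  refine tendsto_atTop_mono' _ ?_ linear
  filter_upwards [eventually_ge_atTop T] with t ht
  linarith [mono self_mem_Ici ht ht]

lemma of_deriv (ha : 0 < a) (hf : ∀ᶠ t in atTop, HasDerivAt f (f' t) t)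
    (hf' : GrowsExp a f') : GrowsExp a f := by
  obtain ⟨c, hc, h⟩ := hf'
  have hg : ∀ᶠ t in atTop, HasDerivAt (fun t ↦ f t - c / (2 * a) * exp (a * t))
      (f' t - c / 2 * exp (a * t)) t := hf.mono fun t ht ↦
    (ht.sub (hasDerivAt_const_mul_exp _ a t)).congr_deriv (by field_simp)
  have grows : GrowsExp a fun t ↦ f' t - c / 2 * exp (a * t) :=
    ⟨c / 2, half_pos hc, h.mono fun t ht ↦ by linarith⟩
  refine ⟨c / (2 * a), by positivity, ?_⟩
  filter_upwards [(tendsto_atTop_of_deriv hg (grows.of_le ha.le)).eventually_ge_atTop 0] with t ht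
  exact sub_nonneg.1 ht

end GrowsExp

/-! ### Scalar ordinary differential equations -/

lemma not_forall_riccati (hf : ∀ t ≥ T, HasDerivAt f (f' t) t) :
    ¬ ∀ t ≥ T, f t ^ 2 / 4 + 1 ≤ f' t := by
  intro hle
  have mono : MonotoneOn (fun t ↦ arctan (f t / 2) - t / 2) (Ici T) :=
    monotoneOn_Ici_of_hasDerivAt (f' := fun t ↦ 1 / (1 + (f t / 2) ^ 2) * (f' t / 2) - 1 / 2)
      (fun t ht ↦ (((hf t ht).div_const 2).arctan).sub ((hasDerivAt_id t).div_const 2))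
      fun t ht ↦ by
        have : 1 ≤ 1 / (1 + (f t / 2) ^ 2) * f' t := by
          rw [one_div, inv_mul_eq_div, le_div_iff₀ (by positivity)]
          linarith [hle t ht]
        linarith
  have := mono self_mem_Ici (show T + 8 ∈ Ici T by simp) (by simp)
  linarith [arctan_lt_pi_div_two (f (T + 8) / 2), neg_pi_div_two_lt_arctan (f T / 2), pi_le_four]

lemma exists_abs_le_of_riccati {M : ℝ} (hf : ∀ t ≥ T, HasDerivAt f (f' t) t)
    (hle : ∀ t ≥ T, M ≤ |f t| → f t ^ 2 / 4 + 1 ≤ f' t) : ∃ B, ∀ t ≥ T, |f t| ≤ B := by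
  have hpos : ∀ t ≥ T, M ≤ |f t| → 0 < f' t := fun t ht hM ↦ by
    linarith [hle t ht hM, sq_nonneg (f t)]
  have lower : ∀ t ≥ T, min (f T) (-M) ≤ f t :=
    const_le_of_hasDerivAt_pos hf (min_le_left _ _) fun t ht he ↦ hpos t ht <|
      le_abs.2 (.inr (le_neg_of_le_neg (he ▸ min_le_right _ _)))
  have upper : ∀ t ≥ T, f t ≤ M := fun s hs ↦ by
    by_contra! hlt
    have above : ∀ t ≥ s, M ≤ f t :=
      const_le_of_hasDerivAt_pos (fun t ht ↦ hf t (hs.trans ht)) hlt.le fun t ht he ↦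
        hpos t (hs.trans ht) (he ▸ le_abs_self _)
    exact not_forall_riccati (fun t ht ↦ hf t (hs.trans ht)) fun t ht ↦
      hle t (hs.trans ht) ((above t ht).trans (le_abs_self _))
  exact ⟨_, fun t ht ↦ abs_le_max_abs_abs (lower t ht) (upper t ht)⟩

-- A level `c` with `G c ≠ 0` is eventually crossed in one direction only.
lemma exists_tendsto_of_asymptotically_autonomous {F : ℝ → ℝ → ℝ} {G : ℝ → ℝ} {B : ℝ}
    (hf : ∀ᶠ t in atTop, HasDerivAt f (F t (f t)) t)
    (hF : ∀ c, Tendsto (fun t ↦ F t c) atTop (𝓝 (G c))) (hG : Dense {c | G c ≠ 0})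
    (hB : ∀ᶠ t in atTop, |f t| ≤ B) : ∃ l, Tendsto f atTop (𝓝 l) := by
  have level (c : ℝ) (hc : G c ≠ 0) :
      (∀ᶠ t in atTop, c ≤ f t) ∨ ∀ᶠ t in atTop, f t ≤ c := by
    rcases hc.lt_or_gt with hneg | hpos
    · obtain ⟨T, hT⟩ := eventually_atTop.1 (hf.and ((hF c).eventually_lt_const hneg))
      by_cases hex : ∃ s ≥ T, f s ≤ c
      · obtain ⟨s, hs, hsc⟩ := hex
        refine .inr <| (eventually_ge_atTop s).mono <| le_const_of_hasDerivAt_neg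
          (fun t ht ↦ (hT t (hs.trans ht)).1) hsc fun t ht he ↦ ?_
        exact he ▸ (hT t (hs.trans ht)).2
      · push Not at hex
        exact .inl <| (eventually_ge_atTop T).mono fun t ht ↦ (hex t ht).le
    · obtain ⟨T, hT⟩ := eventually_atTop.1 (hf.and ((hF c).eventually_const_lt hpos))
      by_cases hex : ∃ s ≥ T, c ≤ f s
      · obtain ⟨s, hs, hsc⟩ := hex
        refine .inl <| (eventually_ge_atTop s).mono <| const_le_of_hasDerivAt_pos
          (fun t ht ↦ (hT t (hs.trans ht)).1) hsc fun t ht he ↦ ?_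
        exact he ▸ (hT t (hs.trans ht)).2
      · push Not at hex
        exact .inr <| (eventually_ge_atTop T).mono fun t ht ↦ (hex t ht).le
  refine tendsto_of_no_upcrossings hG ?_ ⟨B, eventually_map.2 <| hB.mono fun t ht ↦ (abs_le.1 ht).2⟩
    ⟨-B, eventually_map.2 <| hB.mono fun t ht ↦ (abs_le.1 ht).1⟩
  rintro c hc d - hcd ⟨below, above⟩
  rcases level c hc with h | h
  · exact below (h.mono fun t ht ↦ not_lt.2 ht)
  · exact above (h.mono fun t ht ↦ not_lt.2 (ht.trans hcd.le))

lemma exists_eq_mul_exp_of_hasDerivAt_mul {g : ℝ → ℝ} (hg : ContinuousOn g (Ici T))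
    (hf : ∀ t ≥ T, HasDerivAt f (g t * f t) t) :
    ∃ I : ℝ → ℝ, ∀ t ≥ T, HasDerivAt I (g t) t ∧ f t = f T * exp (I t) := by
  have hcont : Continuous fun t ↦ g (max t T) :=
    hg.comp_continuous (by fun_prop) fun t ↦ le_max_right t T
  let I : ℝ → ℝ := fun t ↦ ∫ s in T..t, g (max s T)
  have hI : ∀ t ≥ T, HasDerivAt I (g t) t := fun t ht ↦ by
    simpa [max_eq_left ht] using (hcont.integral_hasStrictDerivAt T t).hasDerivAt
  have hq : ∀ t ≥ T, HasDerivAt (fun t ↦ f t * exp (-I t)) 0 t := fun t ht ↦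
    ((hf t ht).mul (hI t ht).neg.exp).congr_deriv (by ring)
  refine ⟨I, fun t ht ↦ ⟨hI t ht, ?_⟩⟩
  have hconst : ‖f t * exp (-I t) - f T * exp (-I T)‖ ≤ 0 - 0 :=
    norm_sub_le_sub_of_norm_deriv_le hq (g := fun _ ↦ 0) (g' := fun _ ↦ 0)
      (fun t _ ↦ hasDerivAt_const t 0) (by simp) le_rfl ht
  have hIT : I T = 0 := intervalIntegral.integral_same
  rw [sub_self, norm_le_zero_iff, sub_eq_zero, hIT, neg_zero, exp_zero, mul_one] at hconst
  rw [← hconst, mul_assoc, ← exp_add, neg_add_cancel, exp_zero, mul_one]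

/-! ### Convergence rates -/

section Rates

variable {V F : ℝ → ℝ} {m C : ℝ}

lemma abs_le_div_of_repelling {η : ℝ → ℝ} (hm : 0 < m) (hV : ∀ t ≥ T, HasDerivAt V (F t) t)
    (hη : AntitoneOn η (Ici T)) (hη0 : ∀ t ≥ T, 0 ≤ η t)
    (hF : ∀ t ≥ T, m * V t ^ 2 - η t * |V t| ≤ V t * F t) (h0 : Tendsto V atTop (𝓝 0)) :
    ∀ t ≥ T, |V t| ≤ η t / m := by
  have sq_le : ∀ t ≥ T, V t ^ 2 ≤ (η t / m) ^ 2 := by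
    refine le_of_tendsto_of_hasDerivAt_pos (fun t ht ↦ (hV t ht).pow 2) (by simpa using h0.pow 2)
      (fun s hs t ht hst ↦ ?_) (fun t _ ↦ sq_nonneg _) fun t ht hlt ↦ ?_
    · have := hη hs ht hst
      have := hη0 t ht
      gcongr
    · have hab : η t < m * |V t| := by
        rw [← div_lt_iff₀' hm]
        exact lt_of_pow_lt_pow_left₀ 2 (abs_nonneg _) (by rwa [sq_abs])
      have hV0 : 0 < |V t| := by nlinarith [hη0 t ht]
      have := hF t ht
      rw [← sq_abs] at this
      rw [Nat.cast_two, Nat.succ_sub_one, pow_one]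
      nlinarith [mul_pos hV0 (sub_pos.2 hab)]
  exact fun t ht ↦ abs_le_of_sq_le_sq (sq_le t ht) (div_nonneg (hη0 t ht) hm.le)

lemma isBigO_inv_sq_of_attracting (hT : 0 < T) (hm : 0 < m) (hmT : 4 ≤ m * T)
    (hV : ∀ t ≥ T, HasDerivAt V (F t) t)
    (hF : ∀ t ≥ T, V t * F t ≤ -(m * V t ^ 2) + C / t ^ 2 * |V t|) :
    V =O[atTop] fun t ↦ (t ^ 2)⁻¹ := by
  obtain ⟨D, hDC, hDV⟩ : ∃ D, 2 * |C| / m + 1 ≤ D ∧ T ^ 2 * |V T| ≤ D :=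
    ⟨_, le_max_left _ _, le_max_right _ _⟩
  have hD : 0 < D := lt_of_lt_of_le (by positivity) hDC
  have hderiv : ∀ t ≥ T, HasDerivAt (fun t ↦ (t ^ 2 * V t) ^ 2)
      (2 * t ^ 2 * (2 * t * V t ^ 2 + t ^ 2 * (V t * F t))) t := fun t ht ↦
    (((hasDerivAt_pow 2 t).mul (hV t ht)).pow 2).congr_deriv <| by
      simp only [Pi.mul_apply]
      push_cast
      ring
  have barrier : ∀ t ≥ T, (t ^ 2 * V t) ^ 2 ≤ D ^ 2 := by
    refine le_const_of_hasDerivAt_neg hderiv ?_ fun t ht he ↦ ?_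
    · rw [← sq_abs, abs_mul, abs_of_pos (by positivity)]
      gcongr
    · have ht0 : 0 < t := hT.trans_le ht
      have hVD : t ^ 2 * |V t| = D := by
        rw [← abs_of_pos (sq_pos_of_pos ht0), ← abs_mul]
        exact (abs_eq_abs.2 (sq_eq_sq_iff_eq_or_eq_neg.1 he)).trans (abs_of_pos hD)
      have hCD : C < m / 2 * D := by
        have : 2 * |C| < m * D := by
          rw [← div_lt_iff₀' hm]; linarith
        linarith [le_abs_self C]
      have hmt : 2 * t ≤ m / 2 * t ^ 2 := by nlinarith
      have hVF : t ^ 2 * (V t * F t) ≤ -(m * t ^ 2 * V t ^ 2) + C * |V t| := by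
        refine (mul_le_mul_of_nonneg_left (hF t ht) (sq_nonneg t)).trans_eq ?_
        field_simp
      have hCV : C * |V t| < m / 2 * t ^ 2 * V t ^ 2 := by
        calc C * |V t| < m / 2 * D * |V t| :=
              mul_lt_mul_of_pos_right hCD (pos_of_mul_pos_right (hVD ▸ hD) (sq_nonneg t))
          _ = m / 2 * t ^ 2 * V t ^ 2 := by rw [← hVD, ← sq_abs (V t)]; ring
      have := mul_le_mul_of_nonneg_right hmt (sq_nonneg (V t))
      exact mul_neg_of_pos_of_neg (by positivity) (by linarith)
  refine .of_bound D <| (eventually_ge_atTop T).mono fun t ht ↦ ?_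
  have ht0 : 0 < t := hT.trans_le ht
  rw [norm_inv, ← div_eq_mul_inv, norm_eq_abs, norm_eq_abs, abs_of_pos (sq_pos_of_pos ht0),
    le_div_iff₀' (by positivity), ← abs_of_pos (sq_pos_of_pos ht0), ← abs_mul]
  exact abs_le_of_sq_le_sq (barrier t ht) hD.le

lemma isBigO_inv_of_neutral (hT : 0 < T) (hC : 0 ≤ C)
    (hV : ∀ t ≥ T, HasDerivAt V (F t) t) (hF : ∀ t ≥ T, V t ^ 2 / 2 - C / t ^ 2 ≤ F t)
    (h0 : Tendsto V atTop (𝓝 0)) : V =O[atTop] fun t ↦ t⁻¹ := by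
  obtain ⟨D, hDC, hDV⟩ : ∃ D, 4 + C ≤ D ∧ T * |V T| ≤ D := ⟨_, le_max_left _ _, le_max_right _ _⟩
  have hD : 0 < D := by linarith
  have upper : ∀ t ≥ T, V t ≤ D / t := by
    refine le_of_tendsto_of_hasDerivAt_pos hV h0 (fun s hs t _ hst ↦ ?_)
      (fun t ht ↦ div_nonneg hD.le (hT.trans_le ht).le) fun t ht hlt ↦ ?_
    · exact div_le_div_of_nonneg_left hD.le (hT.trans_le hs) hst
    · have ht0 : 0 < t := hT.trans_le ht
      have hsq : (D / t) ^ 2 < V t ^ 2 := pow_lt_pow_left₀ hlt (by positivity) two_ne_zero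
      have : C / t ^ 2 < (D / t) ^ 2 / 2 := by
        rw [div_pow, div_div, mul_comm, ← div_div]
        gcongr
        nlinarith
      linarith [hF t ht]
  have lower : ∀ t ≥ T, -D ≤ t * V t := by
    have hderiv : ∀ t ≥ T, HasDerivAt (fun t ↦ t * V t) (V t + t * F t) t := fun t ht ↦
      ((hasDerivAt_id t).mul (hV t ht)).congr_deriv (by rw [one_mul, id])
    refine const_le_of_hasDerivAt_pos hderiv (by nlinarith [neg_abs_le (V T)]) fun t ht he ↦ ?_
    have ht0 : 0 < t := hT.trans_le ht
    have hVt : V t = -D / t := by rw [eq_div_iff ht0.ne', mul_comm, he]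
    calc 0 < (D ^ 2 / 2 - D - C) / t := div_pos (by nlinarith) ht0
      _ = V t + t * (V t ^ 2 / 2 - C / t ^ 2) := by rw [hVt]; field_simp; ring
      _ ≤ V t + t * F t := by gcongr; exact hF t ht
  refine .of_bound D <| (eventually_ge_atTop T).mono fun t ht ↦ ?_
  rw [norm_inv, ← div_eq_mul_inv, norm_eq_abs, norm_eq_abs, abs_of_pos (hT.trans_le ht)]
  refine abs_le.2 ⟨?_, upper t ht⟩
  rw [← neg_div, div_le_iff₀' (hT.trans_le ht)]
  exact lower t ht

lemma isBigO_inv_sq_of_hyperbolic (hm : m ≠ 0) (hC : 0 ≤ C)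
    (hV : ∀ᶠ t in atTop, HasDerivAt V (F t) t)
    (hF : ∀ᶠ t in atTop, |V t * F t - m * V t ^ 2| ≤ |m| / 2 * V t ^ 2 + C / t ^ 2 * |V t|)
    (h0 : Tendsto V atTop (𝓝 0)) : V =O[atTop] fun t ↦ (t ^ 2)⁻¹ := by
  have hm0 : 0 < |m| := abs_pos.2 hm
  obtain ⟨T, hT⟩ := eventually_atTop.1 (hV.and (hF.and (eventually_ge_atTop (8 / |m|))))
  have hT8 : 8 / |m| ≤ T := (hT T le_rfl).2.2
  have hT0 : 0 < T := lt_of_lt_of_le (by positivity) hT8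
  rcases hm.lt_or_gt with hneg | hpos
  · rw [div_le_iff₀' hm0] at hT8
    refine isBigO_inv_sq_of_attracting hT0 (half_pos hm0) (by linarith)
      (fun t ht ↦ (hT t ht).1) (C := C) fun t ht ↦ ?_
    have := (abs_le.1 (hT t ht).2.1).2
    rw [abs_of_neg hneg] at this ⊢
    linarith
  · have hle : ∀ t ≥ T, |V t| ≤ C / t ^ 2 / (m / 2) := by
      refine abs_le_div_of_repelling (half_pos hpos) (fun t ht ↦ (hT t ht).1)
        (fun s hs t _ hst ↦ ?_) (fun t _ ↦ by positivity) (fun t ht ↦ ?_) h0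
      · have : 0 < s := hT0.trans_le hs
        gcongr
      · have := (abs_le.1 (hT t ht).2.1).1
        rw [abs_of_pos hpos] at this
        linarith
    refine .of_bound (C / (m / 2)) <| (eventually_ge_atTop T).mono fun t ht ↦ (hle t ht).trans_eq ?_
    rw [norm_inv, norm_pow, norm_eq_abs, sq_abs, div_right_comm, div_eq_mul_inv _ (t ^ 2)]

lemma deriv_isBigO_inv_sq (hV : ∀ᶠ t in atTop, HasDerivAt V (F t) t)
    (hF : (fun t ↦ F t - (m * V t + V t ^ 2 / 2)) =O[atTop] fun t ↦ (t ^ 2)⁻¹)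
    (h0 : Tendsto V atTop (𝓝 0)) : F =O[atTop] fun t ↦ (t ^ 2)⁻¹ := by
  obtain ⟨C, hC, hFC⟩ := hF.exists_pos
  suffices h : (fun t ↦ m * V t + V t ^ 2 / 2) =O[atTop] fun t ↦ (t ^ 2)⁻¹ by
    simpa using hF.add h
  have hFC : ∀ᶠ t in atTop, |F t - (m * V t + V t ^ 2 / 2)| ≤ C / t ^ 2 := by
    simpa [div_eq_mul_inv] using hFC.bound
  rcases eq_or_ne m 0 with rfl | hm
  · obtain ⟨T, hT⟩ := eventually_atTop.1 (hV.and (hFC.and (eventually_gt_atTop 0)))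
    have hVO : V =O[atTop] fun t ↦ t⁻¹ :=
      isBigO_inv_of_neutral (hT T le_rfl).2.2 hC.le (fun t ht ↦ (hT t ht).1)
        (fun t ht ↦ by linarith [(abs_le.1 (hT t ht).2.1).1]) h0
    simpa [div_eq_inv_mul] using (hVO.pow 2).const_mul_left 2⁻¹
  · have hVm : ∀ᶠ t in atTop, |V t| ≤ |m| :=
      (abs_zero (α := ℝ) ▸ h0.abs).eventually_le_const (abs_pos.2 hm)
    have hVO : V =O[atTop] fun t ↦ (t ^ 2)⁻¹ := by
      refine isBigO_inv_sq_of_hyperbolic hm hC.le hV ?_ h0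
      filter_upwards [hFC, hVm] with t hF hV
      calc |V t * F t - m * V t ^ 2|
          = |V t ^ 2 / 2 * V t + (F t - (m * V t + V t ^ 2 / 2)) * V t| := by ring_nf
        _ ≤ V t ^ 2 / 2 * |V t| + |F t - (m * V t + V t ^ 2 / 2)| * |V t| := by
          refine (abs_add_le _ _).trans_eq ?_
          rw [abs_mul, abs_div, abs_sq, abs_two, abs_mul]
        _ ≤ V t ^ 2 / 2 * |m| + C / t ^ 2 * |V t| := by gcongr
        _ = |m| / 2 * V t ^ 2 + C / t ^ 2 * |V t| := by ring
    have hbdd : (fun t ↦ m + V t / 2) =O[atTop] fun _ ↦ (1 : ℝ) :=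
      ((h0.div_const 2).const_add m).isBigO_one ℝ
    simpa [add_mul, sq, mul_div_right_comm] using hbdd.mul hVO

end Rates

end CalculusAtInfinity

section SwirlSystem

open Set Asymptotics

lemma hasDerivAt_tanh (t : ℝ) : HasDerivAt tanh (1 / cosh t ^ 2) t := by
  have h := (hasDerivAt_sinh t).div (hasDerivAt_cosh t) (cosh_pos t).ne'
  rw [← sq, ← sq, cosh_sq_sub_sinh_sq] at h
  exact h.congr_of_eventuallyEq (.of_forall tanh_eq_sinh_div_cosh)

lemma cosh_le_exp {t : ℝ} (ht : 0 ≤ t) : cosh t ≤ exp t := by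
  rw [cosh_eq]
  linarith [exp_le_exp.2 (show -t ≤ t by linarith)]

lemma exp_neg_two_mul_le_inv_cosh_sq {t : ℝ} (ht : 0 ≤ t) : exp (-2 * t) ≤ 1 / cosh t ^ 2 := by
  have hle := cosh_le_exp ht
  rw [le_div_iff₀ (by positivity), show -2 * t = -t + -t by ring, exp_add, exp_neg]
  field_simp
  gcongr

lemma half_exp_le_cosh (t : ℝ) : exp t / 2 ≤ cosh t := by
  rw [cosh_eq]
  linarith [exp_pos (-t)]

lemma inv_cosh_sq_le (t : ℝ) : 1 / cosh t ^ 2 ≤ 4 * exp (-2 * t) := by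
  rw [div_le_iff₀ (by positivity), show -2 * t = -t + -t by ring, exp_add, exp_neg]
  have := half_exp_le_cosh t
  field_simp
  nlinarith [exp_pos t]

lemma one_sub_tanh_le (t : ℝ) : 1 - tanh t ≤ 2 * exp (-2 * t) := by
  have h : 1 - tanh t = exp (-t) / cosh t := by
    rw [tanh_eq_sinh_div_cosh, ← cosh_sub_sinh, sub_div, div_self (cosh_pos t).ne']
  rw [h, div_le_iff₀ (cosh_pos t)]
  calc exp (-t) = 2 * exp (-2 * t) * (exp t / 2) := by
        rw [mul_comm 2, mul_assoc, mul_div_cancel₀ _ (two_ne_zero), ← exp_add]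
        ring_nf
    _ ≤ 2 * exp (-2 * t) * cosh t := by gcongr; exact half_exp_le_cosh t

lemma two_mul_tanh_mul_le (t c : ℝ) : 2 * tanh t * c ≤ 2 * |c| := by
  have : |tanh t * c| ≤ 1 * |c| := by
    rw [abs_mul]
    gcongr
    exact (abs_lt.2 ⟨neg_one_lt_tanh t, tanh_lt_one t⟩).le
  linarith [le_abs_self (tanh t * c)]

lemma tendsto_tanh_atTop : Tendsto tanh atTop (𝓝 1) := by
  have h : Tendsto (fun t ↦ 1 - 2 * exp (-2 * t)) atTop (𝓝 1) := by
    simpa using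
      ((tendsto_exp_mul_atTop_nhds_zero (by norm_num : (-2 : ℝ) < 0)).const_mul 2).const_sub 1
  exact tendsto_of_tendsto_of_tendsto_of_le_of_le h tendsto_const_nhds
    (fun t ↦ by linarith [one_sub_tanh_le t]) fun t ↦ (tanh_lt_one t).le

lemma inv_cosh_sq_isBigO : (fun t ↦ 1 / cosh t ^ 2) =O[atTop] fun t ↦ exp (-2 * t) :=
  .of_bound 4 <| .of_forall fun t ↦ by
    simpa [abs_of_pos (exp_pos _)] using inv_cosh_sq_le t

lemma growsExp_inv_cosh_sq : GrowsExp (-2) fun t ↦ 1 / cosh t ^ 2 :=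
  ⟨1, one_pos, (eventually_ge_atTop 0).mono fun t ht ↦ by
    simpa using exp_neg_two_mul_le_inv_cosh_sq ht⟩

lemma isBigO_div_cosh_sq {f : ℝ → ℝ} {a : ℝ} (hf : f =O[atTop] fun t ↦ exp (a * t)) :
    (fun t ↦ f t / cosh t ^ 2) =O[atTop] fun t ↦ exp ((a - 2) * t) := by
  refine (hf.mul inv_cosh_sq_isBigO).congr (fun t ↦ by ring) fun t ↦ ?_
  rw [← exp_add]
  ring_nf

lemma exp_mul_isBigO_exp_mul {a b : ℝ} (h : a ≤ b) :
    (fun t ↦ exp (a * t)) =O[atTop] fun t ↦ exp (b * t) :=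
  .of_norm_eventuallyLE <| (eventually_ge_atTop 0).mono fun t ht ↦ by
    simp only [norm_of_nonneg (exp_pos _).le]
    gcongr

lemma exp_mul_isBigO_inv_sq {a : ℝ} (ha : a < 0) :
    (fun t ↦ exp (a * t)) =O[atTop] fun t ↦ (t ^ 2)⁻¹ := by
  simpa using (isLittleO_exp_neg_mul_rpow_atTop (neg_pos.2 ha) (-2)).isBigO.congr' (.refl _ _)
    ((eventually_ge_atTop 0).mono fun t ht ↦ by
      simp only [rpow_neg ht, rpow_ofNat])

lemma one_sub_neg_tanh_sq (t : ℝ) : 1 - (-tanh t) ^ 2 = 1 / cosh t ^ 2 := by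
  have := cosh_sq_sub_sinh_sq t
  rw [tanh_eq_sinh_div_cosh]
  field_simp
  linarith

lemma sqrt_one_sub_neg_tanh_sq (t : ℝ) : √(1 - (-tanh t) ^ 2) = (cosh t)⁻¹ := by
  rw [one_sub_neg_tanh_sq, sqrt_div zero_le_one, sqrt_sq (cosh_pos t).le, sqrt_one, one_div]

lemma nhdsGT_neg_one_le_map_neg_tanh : 𝓝[>] (-1) ≤ map (fun t ↦ -tanh t) atTop := by
  have hartanh : Tendsto (fun x ↦ artanh (-x)) (𝓝[>] (-1)) atTop := by
    refine tendsto_atTop.2 fun T ↦ ?_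
    filter_upwards [Ioo_mem_nhdsGT (neg_lt_neg (tanh_lt_one T))] with x hx
    rw [← artanh_tanh T]
    exact artanh_le_artanh (neg_one_lt_tanh T) (by linarith [hx.1]) (by linarith [hx.2])
  refine le_trans (Eq.le ?_) (map_mono hartanh)
  rw [map_map, eq_comm]
  convert map_id using 1
  refine Filter.map_congr ?_
  filter_upwards [Ioo_mem_nhdsGT (show (-1 : ℝ) < 1 by norm_num)] with x hx
  simp only [Function.comp_apply, id, tanh_artanh (⟨by linarith [hx.2], by linarith [hx.1]⟩ :
    -x ∈ Set.Ioo (-1) 1), neg_neg]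

lemma inv_cosh_isBigO : (fun t ↦ (cosh t)⁻¹) =O[atTop] fun t ↦ exp (-1 * t) :=
  .of_bound 2 <| .of_forall fun t ↦ by
    rw [norm_of_nonneg (by positivity), norm_of_nonneg (exp_pos _).le, neg_one_mul, exp_neg,
      ← div_eq_mul_inv, ← inv_div]
    exact inv_anti₀ (by positivity) (half_exp_le_cosh t)

lemma log_inv_cosh_sq_isBigO : (fun t ↦ log (cosh t)⁻¹ ^ 2) =O[atTop] fun t ↦ t ^ 2 :=
  .of_norm_eventuallyLE <| (eventually_ge_atTop 0).mono fun t ht ↦ by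
    simp only [norm_of_nonneg (sq_nonneg (log _)), log_inv, neg_sq]
    exact pow_le_pow_left₀ (log_nonneg (one_le_cosh t))
      ((log_le_log (cosh_pos t) (cosh_le_exp ht)).trans_eq (log_exp t)) 2

/-! ### Linear equations `f' = g f` -/

lemma isBigO_exp_of_hasDerivAt_mul {f g : ℝ → ℝ} {a T : ℝ} (hg : ContinuousOn g (Ici T))
    (hf : ∀ t ≥ T, HasDerivAt f (g t * f t) t) (hga : ∀ t ≥ T, g t ≤ a) :
    f =O[atTop] fun t ↦ exp (a * t) := by
  obtain ⟨I, hI⟩ := exists_eq_mul_exp_of_hasDerivAt_mul hg hf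
  have anti : AntitoneOn (fun t ↦ I t - a * t) (Ici T) :=
    antitoneOn_Ici_of_hasDerivAt (fun t ht ↦ (hI t ht).1.sub ((hasDerivAt_id t).const_mul a))
      fun t ht ↦ by linarith [hga t ht]
  refine .of_bound (|f T| * exp (I T - a * T)) <| (eventually_ge_atTop T).mono fun t ht ↦ ?_
  have hle : I t ≤ I T - a * T + a * t := by linarith [anti self_mem_Ici ht ht]
  rw [(hI t ht).2, norm_mul, norm_eq_abs, norm_of_nonneg (exp_pos _).le,
    norm_of_nonneg (exp_pos _).le, mul_assoc, ← exp_add]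
  gcongr

lemma growsExp_of_hasDerivAt_mul {f g : ℝ → ℝ} {a D T : ℝ} (hg : ContinuousOn g (Ici T))
    (hf : ∀ t ≥ T, HasDerivAt f (g t * f t) t) (h0 : 0 < f T)
    (hga : ∀ t ≥ T, a - D * exp (-2 * t) ≤ g t) : GrowsExp a f := by
  obtain ⟨I, hI⟩ := exists_eq_mul_exp_of_hasDerivAt_mul hg hf
  have mono : MonotoneOn (fun t ↦ I t - a * t - D / 2 * exp (-2 * t)) (Ici T) :=
    monotoneOn_Ici_of_hasDerivAt
      (fun t ht ↦ ((hI t ht).1.sub ((hasDerivAt_id t).const_mul a)).sub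
        (hasDerivAt_const_mul_exp (D / 2) (-2) t))
      fun t ht ↦ by linarith [hga t ht]
  refine ⟨f T * exp (I T - a * T - D / 2 * exp (-2 * T) - |D| / 2), by positivity, ?_⟩
  filter_upwards [eventually_ge_atTop T, eventually_ge_atTop 0] with t ht ht0
  have hD : -(|D| / 2) ≤ D / 2 * exp (-2 * t) := by
    have : exp (-2 * t) ≤ 1 := exp_le_one_iff.2 (by linarith)
    nlinarith [neg_abs_le D, abs_nonneg D, exp_pos (-2 * t)]
  rw [(hI t ht).2, mul_assoc, ← exp_add]
  gcongr
  linarith [mono self_mem_Ici ht ht]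

/-- The system satisfied near the south pole by the profile of an axisymmetric conical flow, in the
time `t = artanh (-cos θ)`: here `U = sin θ u_θ`, `W = sin θ u_φ` and `Z = dW / d(cos θ)`, the
functions `L` and `K = dL / d(cos θ)` are successive integrals of the meridional equations, and
`P = -dK / d(cos θ)`. In this time `cos θ = -tanh t` and `sin² θ = 1 / cosh² t`. Only the behaviour
as `t → ∞` matters, so the equations are required for large `t`. -/
structure SwirlSystem (U L K P W Z : ℝ → ℝ) : Prop where
  hasDerivAt_U : ∀ᶠ t in atTop, HasDerivAt U (U t ^ 2 / 2 - 2 * tanh t * U t - L t) t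
  hasDerivAt_L : ∀ᶠ t in atTop, HasDerivAt L (-(K t / cosh t ^ 2)) t
  hasDerivAt_K : ∀ᶠ t in atTop, HasDerivAt K (P t / cosh t ^ 2) t
  hasDerivAt_P : ∀ᶠ t in atTop, HasDerivAt P (-2 * (W t * Z t)) t
  hasDerivAt_W : ∀ᶠ t in atTop, HasDerivAt W (-(Z t / cosh t ^ 2)) t
  hasDerivAt_Z : ∀ᶠ t in atTop, HasDerivAt Z (U t * Z t) t

namespace SwirlSystem

variable {U L K P W Z : ℝ → ℝ} {C l τ : ℝ}

lemma neg_swirl (h : SwirlSystem U L K P W Z) :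
    SwirlSystem U L K P (fun t ↦ -W t) fun t ↦ -Z t where
  __ := h
  hasDerivAt_P := by simpa using h.hasDerivAt_P
  hasDerivAt_W := h.hasDerivAt_W.mono fun t ht ↦ ht.neg.congr_deriv (by ring)
  hasDerivAt_Z := h.hasDerivAt_Z.mono fun t ht ↦ ht.neg.congr_deriv (by ring)

lemma exists_continuousOn_and_hasDerivAt_Z (h : SwirlSystem U L K P W Z) :
    ∃ T, ContinuousOn U (Ici T) ∧ ∀ t ≥ T, HasDerivAt Z (U t * Z t) t := by
  obtain ⟨T, hT⟩ := eventually_atTop.1 (h.hasDerivAt_U.and h.hasDerivAt_Z)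
  exact ⟨T, fun t ht ↦ (hT t ht).1.continuousAt.continuousWithinAt, fun t ht ↦ (hT t ht).2⟩

lemma eventually_swirl_sign_of_pos (h : SwirlSystem U L K P W Z) (hZ : ∀ᶠ t in atTop, 0 < Z t) :
    (∀ᶠ t in atTop, 0 ≤ W t * Z t) ∨ ∀ᶠ t in atTop, W t < 0 ∧ 0 < Z t := by
  obtain ⟨T, hT⟩ := eventually_atTop.1 (h.hasDerivAt_W.and hZ)
  have anti : AntitoneOn W (Ici T) := antitoneOn_Ici_of_hasDerivAt (fun t ht ↦ (hT t ht).1)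
    fun t ht ↦ neg_nonpos.2 (div_nonneg (hT t ht).2.le (sq_nonneg _))
  by_cases hW : ∀ t ≥ T, 0 ≤ W t
  · exact .inl <| (eventually_ge_atTop T).mono fun t ht ↦ mul_nonneg (hW t ht) (hT t ht).2.le
  · push Not at hW
    obtain ⟨s, hs, hWs⟩ := hW
    exact .inr <| (eventually_ge_atTop s).mono fun t ht ↦
      ⟨(anti hs (hs.trans ht) ht).trans_lt hWs, (hT t (hs.trans ht)).2⟩

lemma eventually_swirl_sign (h : SwirlSystem U L K P W Z) :
    (∀ᶠ t in atTop, 0 ≤ W t * Z t) ∨ (∀ᶠ t in atTop, W t < 0 ∧ 0 < Z t) ∨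
      ∀ᶠ t in atTop, 0 < W t ∧ Z t < 0 := by
  obtain ⟨T, hU, hZ⟩ := h.exists_continuousOn_and_hasDerivAt_Z
  obtain ⟨I, hI⟩ := exists_eq_mul_exp_of_hasDerivAt_mul hU hZ
  rcases lt_trichotomy (Z T) 0 with hneg | hzero | hpos
  · have hZ' : ∀ᶠ t in atTop, 0 < -Z t := (eventually_ge_atTop T).mono fun t ht ↦ by
      rw [(hI t ht).2, ← neg_mul]
      exact mul_pos (neg_pos.2 hneg) (exp_pos _)
    exact (h.neg_swirl.eventually_swirl_sign_of_pos hZ').imp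
      (by simp only [neg_mul_neg, imp_self]) fun hW ↦ .inr <| hW.mono fun t ht ↦ by simpa using ht
  · exact .inl <| (eventually_ge_atTop T).mono fun t ht ↦ by simp [(hI t ht).2, hzero]
  · have hZ' : ∀ᶠ t in atTop, 0 < Z t := (eventually_ge_atTop T).mono fun t ht ↦ by
      rw [(hI t ht).2]
      exact mul_pos hpos (exp_pos _)
    exact (h.eventually_swirl_sign_of_pos hZ').imp_right .inl

/-! ### Swirl with `W Z ≥ 0` -/

lemma W_isBigO_one_of_nonneg (h : SwirlSystem U L K P W Z) (hWZ : ∀ᶠ t in atTop, 0 ≤ W t * Z t) :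
    W =O[atTop] fun _ ↦ (1 : ℝ) := by
  obtain ⟨T, hT⟩ := eventually_atTop.1 (h.hasDerivAt_W.and hWZ)
  have anti : AntitoneOn (fun t ↦ W t ^ 2) (Ici T) :=
    antitoneOn_Ici_of_hasDerivAt (fun t ht ↦ (hT t ht).1.pow 2) fun t ht ↦ by
      have := div_nonneg (hT t ht).2 (sq_nonneg (cosh t))
      rw [mul_div_assoc] at this
      linarith
  exact .of_bound |W T| <| (eventually_ge_atTop T).mono fun t ht ↦ by
    simpa using sq_le_sq.1 (anti self_mem_Ici ht ht)

-- Since `P'/cosh² = (W²)'`, the difference `P/cosh² - W²` has derivative `-2 tanh t P/cosh²`, which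
-- points inwards wherever the difference exceeds `W²` in absolute value.
lemma P_div_cosh_sq_isBigO_one_of_nonneg (h : SwirlSystem U L K P W Z)
    (hWZ : ∀ᶠ t in atTop, 0 ≤ W t * Z t) :
    (fun t ↦ P t / cosh t ^ 2) =O[atTop] fun _ ↦ (1 : ℝ) := by
  have hW2 : (fun t ↦ W t ^ 2) =O[atTop] fun _ ↦ (1 : ℝ) := by
    simpa using (h.W_isBigO_one_of_nonneg hWZ).pow 2
  obtain ⟨B, hB⟩ := hW2.bound
  obtain ⟨T, hT⟩ := eventually_atTop.1
    (hB.and (h.hasDerivAt_P.and (h.hasDerivAt_W.and (eventually_gt_atTop 0))))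
  have hWB : ∀ t ≥ T, W t ^ 2 ≤ B := fun t ht ↦ by simpa using (hT t ht).1
  set D : ℝ → ℝ := fun t ↦ P t / cosh t ^ 2 - W t ^ 2
  have hD : ∀ t ≥ T, HasDerivAt D (-2 * tanh t * (D t + W t ^ 2)) t := fun t ht ↦ by
    have hcosh : HasDerivAt (fun t ↦ cosh t ^ 2) (2 * cosh t * sinh t) t := by
      simpa using (hasDerivAt_cosh t).fun_pow 2
    refine (((hT t ht).2.1.div hcosh (by positivity)).sub ((hT t ht).2.2.1.pow 2)).congr_deriv ?_
    simp only [D, tanh_eq_sinh_div_cosh, Nat.cast_ofNat]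
    field_simp
    ring
  have htanh : ∀ t ≥ T, 0 < tanh t := fun t ht ↦ by
    rw [tanh_eq_sinh_div_cosh]
    exact div_pos (sinh_pos_iff.2 (hT t ht).2.2.2) (cosh_pos t)
  have upper := le_const_of_hasDerivAt_neg (b := |D T| + 1) hD (by linarith [le_abs_self (D T)])
    fun t ht he ↦ by rw [he]; nlinarith [htanh t ht, abs_nonneg (D T), sq_nonneg (W t)]
  have lower := const_le_of_hasDerivAt_pos (b := -(|D T| + B + 1)) hD
    (by linarith [neg_abs_le (D T), hWB T le_rfl, sq_nonneg (W T)])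
    fun t ht he ↦ by rw [he]; nlinarith [htanh t ht, abs_nonneg (D T), hWB t ht]
  have hDO : D =O[atTop] fun _ ↦ (1 : ℝ) := .of_bound (|D T| + B + 1) <|
    (eventually_ge_atTop T).mono fun t ht ↦ by
      have := (sq_nonneg (W t)).trans (hWB t ht)
      simpa using abs_le.2 ⟨lower t ht, (upper t ht).trans (by linarith)⟩
  simpa [D] using hDO.add hW2

lemma exists_decay_of_nonneg (h : SwirlSystem U L K P W Z) (hWZ : ∀ᶠ t in atTop, 0 ≤ W t * Z t) :
    ∃ κ ∈ Ioo (0 : ℝ) 1, (fun t ↦ K t / cosh t ^ 2) =O[atTop] (fun t ↦ exp (-κ * t)) ∧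
      W =O[atTop] fun t ↦ exp ((1 - κ) * t) := by
  have hK : K =O[atTop] fun t ↦ exp (1 * t) := isBigO_exp_of_deriv_isBigO_exp one_pos
    h.hasDerivAt_K ((h.P_div_cosh_sq_isBigO_one_of_nonneg hWZ).trans (isBigO_const_exp one_pos _))
  exact ⟨1 / 2, by norm_num,
    (isBigO_div_cosh_sq hK).trans (exp_mul_isBigO_exp_mul (by norm_num)),
    (h.W_isBigO_one_of_nonneg hWZ).trans (isBigO_const_exp (by norm_num) _)⟩

/-! ### Swirl with `W < 0 < Z` -/

lemma exists_le_K_of_nonpos (h : SwirlSystem U L K P W Z) (hWZ : ∀ᶠ t in atTop, W t * Z t ≤ 0) :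
    ∃ C ≥ 0, ∀ᶠ t in atTop, -C ≤ K t := by
  obtain ⟨T, hT⟩ := eventually_atTop.1 (h.hasDerivAt_P.and (h.hasDerivAt_K.and hWZ))
  have monoP : MonotoneOn P (Ici T) := monotoneOn_Ici_of_hasDerivAt (fun t ht ↦ (hT t ht).1)
    fun t ht ↦ by linarith [(hT t ht).2.2]
  have monoK : MonotoneOn (fun t ↦ K t - P T * tanh t) (Ici T) :=
    monotoneOn_Ici_of_hasDerivAt
      (fun t ht ↦ (hT t ht).2.1.sub ((hasDerivAt_tanh t).const_mul (P T))) fun t ht ↦ by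
        have := monoP self_mem_Ici ht ht
        rw [mul_one_div, ← sub_div]
        exact div_nonneg (by linarith) (sq_nonneg _)
  refine ⟨|K T| + 2 * |P T|, by positivity, (eventually_ge_atTop T).mono fun t ht ↦ ?_⟩
  have hle : |P T * (tanh T - tanh t)| ≤ |P T| * 2 := by
    rw [abs_mul]
    gcongr
    exact abs_le.2 ⟨by linarith [neg_one_lt_tanh T, tanh_lt_one t],
      by linarith [neg_one_lt_tanh t, tanh_lt_one T]⟩
  have := monoK self_mem_Ici ht ht
  simp only at this
  linarith [(abs_le.1 hle).2, neg_abs_le (K T)]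

-- Otherwise `U' ≥ U² / 4 + 1` for large times, and `U` blows up.
lemma exists_ge_neg_five_lt_L (h : SwirlSystem U L K P W Z) (T : ℝ) : ∃ t ≥ T, -5 < L t := by
  obtain ⟨S, hS⟩ := eventually_atTop.1 h.hasDerivAt_U
  by_contra! hL
  refine not_forall_riccati (T := max S T) (fun t ht ↦ hS t (le_of_max_le_left ht)) fun t ht ↦ ?_
  nlinarith [two_mul_tanh_mul_le t (U t), hL t (le_of_max_le_right ht), sq_nonneg (|U t| - 4),
    sq_abs (U t)]

lemma exists_tendsto_L (h : SwirlSystem U L K P W Z) (hC : 0 ≤ C) (hK : ∀ᶠ t in atTop, -C ≤ K t) :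
    ∃ l, Tendsto L atTop (𝓝 l) ∧ ∀ᶠ t in atTop, l - 2 * C * exp (-2 * t) ≤ L t := by
  obtain ⟨T, hT⟩ := eventually_atTop.1 (h.hasDerivAt_L.and hK)
  have anti : AntitoneOn (fun t ↦ L t - C * tanh t) (Ici T) :=
    antitoneOn_Ici_of_hasDerivAt
      (fun t ht ↦ (hT t ht).1.sub ((hasDerivAt_tanh t).const_mul C)) fun t ht ↦ by
        rw [mul_one_div, ← neg_div, ← sub_div]
        exact div_nonpos_of_nonpos_of_nonneg (by linarith [(hT t ht).2]) (sq_nonneg _)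
  have below : ∀ t ≥ T, -5 - C ≤ L t - C * tanh t := fun t ht ↦ by
    obtain ⟨s, hs, hLs⟩ := h.exists_ge_neg_five_lt_L t
    have := anti ht (ht.trans hs) hs
    nlinarith [tanh_lt_one s]
  obtain ⟨m, hm, hmle⟩ := exists_tendsto_of_antitoneOn_Ici anti below
  refine ⟨m + C * 1, by simpa using hm.add (tendsto_tanh_atTop.const_mul C), ?_⟩
  filter_upwards [eventually_ge_atTop T] with t ht
  nlinarith [hmle t ht, one_sub_tanh_le t]

lemma exists_tendsto_U (h : SwirlSystem U L K P W Z) (hL : Tendsto L atTop (𝓝 l)) :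
    ∃ τ, Tendsto U atTop (𝓝 τ) ∧ l = τ ^ 2 / 2 - 2 * τ := by
  have hF : ∀ c, Tendsto (fun t ↦ c ^ 2 / 2 - 2 * tanh t * c - L t) atTop
      (𝓝 (c ^ 2 / 2 - 2 * c - l)) := fun c ↦ by
    simpa using (((tendsto_tanh_atTop.const_mul 2).mul_const c).const_sub (c ^ 2 / 2)).sub hL
  obtain ⟨T, hT⟩ := eventually_atTop.1
    (h.hasDerivAt_U.and (hL.abs.eventually_lt_const (lt_add_one |l|)))
  obtain ⟨B, hB⟩ := exists_abs_le_of_riccati (M := 10 + |l|) (fun t ht ↦ (hT t ht).1)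
    fun t ht hM ↦ by
      nlinarith [two_mul_tanh_mul_le t (U t), le_abs_self (L t), (hT t ht).2, sq_abs (U t),
        abs_nonneg l]
  have hdense : Dense {c : ℝ | c ^ 2 / 2 - 2 * c - l ≠ 0} := by
    refine Set.Countable.dense_compl ℝ (s := {c | c ^ 2 / 2 - 2 * c - l = 0}) <|
      (Set.toFinite {2 + √(4 + 2 * l), 2 - √(4 + 2 * l)}).countable.mono fun c hc ↦ ?_
    have hsq : (c - 2) ^ 2 = 4 + 2 * l := by linarith [hc.out]
    rcases abs_choice (c - 2) with habs | habs <;>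
      rw [← sqrt_sq_eq_abs, hsq] at habs
    · exact .inl (by linarith)
    · exact .inr (by simp only [mem_singleton_iff]; linarith)
  obtain ⟨τ, hτ⟩ := exists_tendsto_of_asymptotically_autonomous
    (F := fun t c ↦ c ^ 2 / 2 - 2 * tanh t * c - L t) h.hasDerivAt_U hF hdense
    ((eventually_ge_atTop T).mono hB)
  have hlim : Tendsto (fun t ↦ U t ^ 2 / 2 - 2 * tanh t * U t - L t) atTop
      (𝓝 (τ ^ 2 / 2 - 2 * 1 * τ - l)) :=
    (((hτ.pow 2).div_const 2).sub ((tendsto_tanh_atTop.const_mul 2).mul hτ)).sub hL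
  exact ⟨τ, hτ, by linarith [eq_zero_of_tendsto_of_tendsto_deriv h.hasDerivAt_U hτ hlim]⟩

-- In the borderline case `τ = 3` the limit of `L` is `-3 / 2`, and while `U < 3 - D exp (-2 t)` the
-- equation makes `U` decrease, away from its limit.
lemma exists_three_sub_exp_le_U (h : SwirlSystem U L K P W Z) (hτ : Tendsto U atTop (𝓝 τ))
    (hL : ∀ᶠ t in atTop, τ ^ 2 / 2 - 2 * τ - 2 * C * exp (-2 * t) ≤ L t) (hC : 0 ≤ C)
    (h3 : 3 ≤ τ) : ∃ D, ∀ᶠ t in atTop, 3 - D * exp (-2 * t) ≤ U t := by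
  rcases h3.eq_or_lt with rfl | hlt
  · set D := 24 + 4 * C
    have hDe (t : ℝ) : 0 ≤ D * exp (-2 * t) := by simp only [D]; positivity
    obtain ⟨T, hT⟩ := eventually_atTop.1
      (h.hasDerivAt_U.and (hL.and (hτ.eventually_const_le (show (2 : ℝ) < 3 by norm_num))))
    have hle : ∀ t ≥ T, -U t ≤ -3 + D * exp (-2 * t) := by
      refine le_of_tendsto_of_hasDerivAt_pos (fun t ht ↦ (hT t ht).1.neg) hτ.neg
        (fun s _ t _ hst ↦ ?_) (fun t _ ↦ by linarith [hDe t]) fun t ht hU ↦ ?_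
      · have : exp (-2 * t) ≤ exp (-2 * s) := exp_le_exp.2 (by linarith)
        simp only [D]
        gcongr
      · obtain ⟨-, hLt, hU2⟩ := hT t ht
        have hU3 : U t ≤ 3 := by linarith [hDe t]
        simp only [D] at hU
        nlinarith [mul_le_mul (one_sub_tanh_le t) hU3 (by linarith) (by positivity)]
    exact ⟨D, (eventually_ge_atTop T).mono fun t ht ↦ by linarith [hle t ht]⟩
  · exact ⟨0, (hτ.eventually_const_le hlt).mono fun t ht ↦ by simpa using ht⟩

-- If the limit were at least `3`, then `Z`, `-W`, `P`, `K` would grow at least at the exponential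
-- rates `3`, `1`, `4`, `2`, so that `-L'` would not decay.
lemma limit_U_lt_three (h : SwirlSystem U L K P W Z) (hWZ : ∀ᶠ t in atTop, W t < 0 ∧ 0 < Z t)
    (hτ : Tendsto U atTop (𝓝 τ)) (hLl : Tendsto L atTop (𝓝 (τ ^ 2 / 2 - 2 * τ))) (hC : 0 ≤ C)
    (hL : ∀ᶠ t in atTop, τ ^ 2 / 2 - 2 * τ - 2 * C * exp (-2 * t) ≤ L t) : τ < 3 := by
  by_contra! h3
  obtain ⟨D, hD⟩ := h.exists_three_sub_exp_le_U hτ hL hC h3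
  have gZ : GrowsExp 3 Z := by
    obtain ⟨S, hU, hZ⟩ := h.exists_continuousOn_and_hasDerivAt_Z
    obtain ⟨T, hT⟩ := eventually_atTop.1 ((hD.and hWZ).and (eventually_ge_atTop S))
    exact growsExp_of_hasDerivAt_mul (hU.mono (Ici_subset_Ici.2 (hT T le_rfl).2))
      (fun t ht ↦ hZ t (hT t ht).2) (hT T le_rfl).1.2.2 fun t ht ↦ (hT t ht).1.1
  have gW : GrowsExp 1 fun t ↦ -W t :=
    .of_deriv one_pos (h.hasDerivAt_W.mono fun t ht ↦ ht.neg)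
      (by simpa [div_eq_mul_inv] using (gZ.mul growsExp_inv_cosh_sq).of_le (b := 1) (by norm_num))
  have gP : GrowsExp 4 P := .of_deriv four_pos h.hasDerivAt_P <|
    (((gW.mul gZ).const_mul two_pos).of_le (b := 4) (by norm_num)).mono <|
      .of_forall fun t ↦ by simp
  have gK : GrowsExp 2 K := .of_deriv two_pos h.hasDerivAt_K
    (by simpa [div_eq_mul_inv] using (gP.mul growsExp_inv_cosh_sq).of_le (b := 2) (by norm_num))
  have gL : Tendsto (fun t ↦ -L t) atTop atTop :=
    GrowsExp.tendsto_atTop_of_deriv (h.hasDerivAt_L.mono fun t ht ↦ ht.neg)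
      (by simpa [div_eq_mul_inv] using (gK.mul growsExp_inv_cosh_sq).of_le (b := 0) (by norm_num))
  exact not_tendsto_nhds_of_tendsto_atTop gL _ hLl.neg

lemma exists_decay_of_limit_U_lt_three (h : SwirlSystem U L K P W Z)
    (hτ : Tendsto U atTop (𝓝 τ)) (h3 : τ < 3) :
    ∃ κ ∈ Ioo (0 : ℝ) 1, (fun t ↦ K t / cosh t ^ 2) =O[atTop] (fun t ↦ exp (-κ * t)) ∧
      W =O[atTop] fun t ↦ exp ((1 - κ) * t) := by
  obtain ⟨a, hmax, ha3⟩ := exists_between (max_lt h3 (by norm_num : (2 : ℝ) < 3))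
  obtain ⟨hτa, ha2⟩ := max_lt_iff.1 hmax
  have hZ : Z =O[atTop] fun t ↦ exp (a * t) := by
    obtain ⟨S, hU, hZ⟩ := h.exists_continuousOn_and_hasDerivAt_Z
    obtain ⟨T, hT⟩ := eventually_atTop.1
      ((hτ.eventually_le_const hτa).and (eventually_ge_atTop S))
    exact isBigO_exp_of_hasDerivAt_mul (hU.mono (Ici_subset_Ici.2 (hT T le_rfl).2))
      (fun t ht ↦ hZ t (hT t ht).2) fun t ht ↦ (hT t ht).1
  have hW : W =O[atTop] fun t ↦ exp ((a - 2) * t) :=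
    isBigO_exp_of_deriv_isBigO_exp (by linarith) h.hasDerivAt_W (isBigO_div_cosh_sq hZ).neg_left
  have hP : P =O[atTop] fun t ↦ exp ((2 * a - 2) * t) := by
    refine isBigO_exp_of_deriv_isBigO_exp (by linarith) h.hasDerivAt_P <|
      ((hW.mul hZ).const_mul_left (-2)).congr_right fun t ↦ ?_
    rw [← exp_add]
    ring_nf
  have hK : K =O[atTop] fun t ↦ exp ((2 * a - 2 - 2) * t) :=
    isBigO_exp_of_deriv_isBigO_exp (by linarith) h.hasDerivAt_K (isBigO_div_cosh_sq hP)
  exact ⟨3 - a, ⟨by linarith, by linarith⟩,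
    (isBigO_div_cosh_sq hK).trans (exp_mul_isBigO_exp_mul (by linarith)),
    hW.trans (exp_mul_isBigO_exp_mul (by linarith))⟩

lemma exists_decay_of_neg_of_pos (h : SwirlSystem U L K P W Z)
    (hWZ : ∀ᶠ t in atTop, W t < 0 ∧ 0 < Z t) :
    ∃ κ ∈ Ioo (0 : ℝ) 1, (fun t ↦ K t / cosh t ^ 2) =O[atTop] (fun t ↦ exp (-κ * t)) ∧
      W =O[atTop] fun t ↦ exp ((1 - κ) * t) := by
  obtain ⟨C, hC, hK⟩ := h.exists_le_K_of_nonpos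
    (hWZ.mono fun t ht ↦ (mul_neg_of_neg_of_pos ht.1 ht.2).le)
  obtain ⟨l, hl, hL⟩ := h.exists_tendsto_L hC hK
  obtain ⟨τ, hτ, rfl⟩ := h.exists_tendsto_U hl
  exact h.exists_decay_of_limit_U_lt_three hτ (h.limit_U_lt_three hWZ hτ hl hC hL)

/-! ### Asymptotics of an arbitrary solution -/

lemma exists_decay (h : SwirlSystem U L K P W Z) :
    ∃ κ ∈ Ioo (0 : ℝ) 1, (fun t ↦ K t / cosh t ^ 2) =O[atTop] (fun t ↦ exp (-κ * t)) ∧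
      W =O[atTop] fun t ↦ exp ((1 - κ) * t) := by
  rcases h.eventually_swirl_sign with hnonneg | hneg | hpos
  · exact h.exists_decay_of_nonneg hnonneg
  · exact h.exists_decay_of_neg_of_pos hneg
  · simpa using h.neg_swirl.exists_decay_of_neg_of_pos (by simpa using hpos)

-- With `V = U - τ`, exponential decay of `L - l` turns the first equation into
-- `V' = (τ - 2) V + V² / 2 + O(t⁻²)`.
lemma deriv_U_isBigO_inv_sq (h : SwirlSystem U L K P W Z) {κ : ℝ} (hκ : 0 < κ)
    (hτ : Tendsto U atTop (𝓝 τ))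
    (hL : (fun t ↦ L t - (τ ^ 2 / 2 - 2 * τ)) =O[atTop] fun t ↦ exp (-κ * t)) :
    (fun t ↦ U t ^ 2 / 2 - 2 * tanh t * U t - L t) =O[atTop] fun t ↦ (t ^ 2)⁻¹ := by
  have htanh : (fun t ↦ 1 - tanh t) =O[atTop] fun t ↦ (t ^ 2)⁻¹ := by
    refine .trans (.of_bound 2 <| .of_forall fun t ↦ ?_)
      (exp_mul_isBigO_inv_sq (by norm_num : (-2 : ℝ) < 0))
    rw [norm_of_nonneg (sub_nonneg.2 (tanh_lt_one t).le), norm_of_nonneg (exp_pos _).le]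
    exact one_sub_tanh_le t
  refine deriv_isBigO_inv_sq (V := fun t ↦ U t - τ) (m := τ - 2)
    (h.hasDerivAt_U.mono fun t ht ↦ ht.sub_const τ) ?_ (by simpa using hτ.sub_const τ)
  have hsmall := (((htanh.mul (hτ.isBigO_one ℝ)).const_mul_left 2).congr_right
    fun t ↦ mul_one _).sub (hL.trans (exp_mul_isBigO_inv_sq (neg_neg_of_pos hκ)))
  exact hsmall.congr_left fun t ↦ by ring

theorem asymptotics (h : SwirlSystem U L K P W Z) :
    ∃ τ, Tendsto U atTop (𝓝 τ) ∧
      (fun t ↦ U t ^ 2 / 2 - 2 * tanh t * U t - L t) =O[atTop] (fun t ↦ (t ^ 2)⁻¹) ∧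
      ∃ b < 1, W =O[atTop] fun t ↦ exp (b * t) := by
  obtain ⟨κ, ⟨hκ0, -⟩, hK, hW⟩ := h.exists_decay
  obtain ⟨l, hl, hLl⟩ := exists_tendsto_of_deriv_isBigO_exp (neg_neg_of_pos hκ0) h.hasDerivAt_L
    hK.neg_left
  obtain ⟨τ, hτ, rfl⟩ := h.exists_tendsto_U hl
  exact ⟨τ, hτ, h.deriv_U_isBigO_inv_sq hκ0 hτ hLl, 1 - κ, by linarith, hW⟩

end SwirlSystem

end SwirlSystem

lemma hasDerivAt_of_contDiffOn_two {g : ℝ → ℝ} {s : Set ℝ} {x : ℝ} (hg : ContDiffOn ℝ 2 g s)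
    (hs : IsOpen s) (hx : x ∈ s) :
    HasDerivAt g (deriv g x) x ∧ HasDerivAt (deriv g) (deriv (deriv g) x) x := by
  have hnhds : s ∈ 𝓝 x := hs.mem_nhds hx
  have hg' : ContDiffOn ℝ 1 (deriv g) s :=
    ((contDiffOn_succ_iff_deriv_of_isOpen hs (n := 1)).1 hg).2.2
  exact ⟨((hg.contDiffAt hnhds).differentiableAt (by norm_num)).hasDerivAt,
    ((hg'.contDiffAt hnhds).differentiableAt (by norm_num)).hasDerivAt⟩

lemma hasDerivAt_one_sub_sq (x : ℝ) : HasDerivAt (fun x ↦ 1 - x ^ 2) (-(2 * x)) x := by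
  simpa using (hasDerivAt_pow 2 x).const_sub 1

/-- The functions of `cos θ` describing an axisymmetric conical flow: on the unit sphere, with
`ρ = sin θ` the distance to the axis, `R / ρ`, `W / ρ` and `C` are the cylindrical radial, angular
and axial components of the velocity. -/
structure Profile where
  (R W C : ℝ → ℝ)

namespace Profile

variable (f : Profile)

/-- The polar component `u_θ` of the velocity, multiplied by `sin θ`. -/
def U (x : ℝ) : ℝ := x * f.R x - (1 - x ^ 2) * f.C x

/-- The radial component `u_r` of the velocity. -/
def V (x : ℝ) : ℝ := f.R x + x * f.C x

/-- The cylindrical radial component of `Δu - (u · ∇)u` on the unit sphere, divided by `sin θ`. -/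
def radialForce (x : ℝ) : ℝ :=
  deriv (deriv f.R) x + f.U x * deriv f.R x / (1 - x ^ 2) +
    (f.R x ^ 2 + f.W x ^ 2) / (1 - x ^ 2) ^ 2

/-- The angular component of `Δu - (u · ∇)u` on the unit sphere, divided by `sin θ`. -/
def swirlForce (x : ℝ) : ℝ :=
  deriv (deriv f.W) x + f.U x * deriv f.W x / (1 - x ^ 2)

/-- The axial component of `Δu - (u · ∇)u` on the unit sphere. -/
def axialForce (x : ℝ) : ℝ :=
  (1 - x ^ 2) * deriv (deriv f.C) x - 2 * x * deriv f.C x + f.U x * deriv f.C x + f.V x * f.C x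

/-- The stationary Navier–Stokes equations for a profile and for the restriction `Q` of the pressure
to the unit sphere, as ordinary differential equations on `-1 < cos θ < h`. The equation `radial`
carries no derivative of `Q` because the pressure is homogeneous of degree `-2`. -/
structure SolvesNS (Q : ℝ → ℝ) (h : ℝ) : Prop where
  contDiffOn_R : ContDiffOn ℝ 2 f.R (Set.Ioo (-1) h)
  contDiffOn_W : ContDiffOn ℝ 2 f.W (Set.Ioo (-1) h)
  contDiffOn_C : ContDiffOn ℝ 2 f.C (Set.Ioo (-1) h)
  incompressible : ∀ x ∈ Set.Ioo (-1) h, (1 - x ^ 2) * deriv f.C x = x * (deriv f.R x + f.C x)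
  radial : ∀ x ∈ Set.Ioo (-1) h,
    (1 - x ^ 2) * f.radialForce x + x * f.axialForce x + 2 * Q x = 0
  polar : ∀ x ∈ Set.Ioo (-1) h, HasDerivAt Q (f.axialForce x - x * f.radialForce x) x
  angular : ∀ x ∈ Set.Ioo (-1) h, f.swirlForce x = 0

/-- The derivative of `V`. -/
def V' (x : ℝ) : ℝ := deriv f.R x + f.C x + x * deriv f.C x

/-- The first integral of `K`. -/
def L (x : ℝ) : ℝ := (1 - x ^ 2) * f.V x + 2 * x * f.U x + f.U x ^ 2 / 2

/-- The derivative of `L`. -/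
def K (x : ℝ) : ℝ := (1 - x ^ 2) * f.V' x + 2 * f.U x + f.U x * f.V x

/-- The modified total head, equal to `-K'` by the radial momentum equation. -/
def P (Q : ℝ → ℝ) (x : ℝ) : ℝ := 2 * Q x + (f.U x ^ 2 + f.W x ^ 2) / (1 - x ^ 2) - 2 * f.V x

variable {f} {Q : ℝ → ℝ} {h x : ℝ}

namespace SolvesNS

variable (hf : f.SolvesNS Q h) (hx : x ∈ Set.Ioo (-1) h)
include hf hx

lemma hasDerivAt_R : HasDerivAt f.R (deriv f.R x) x :=
  (hasDerivAt_of_contDiffOn_two hf.contDiffOn_R isOpen_Ioo hx).1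

lemma hasDerivAt_deriv_R : HasDerivAt (deriv f.R) (deriv (deriv f.R) x) x :=
  (hasDerivAt_of_contDiffOn_two hf.contDiffOn_R isOpen_Ioo hx).2

lemma hasDerivAt_W : HasDerivAt f.W (deriv f.W x) x :=
  (hasDerivAt_of_contDiffOn_two hf.contDiffOn_W isOpen_Ioo hx).1

lemma hasDerivAt_C : HasDerivAt f.C (deriv f.C x) x :=
  (hasDerivAt_of_contDiffOn_two hf.contDiffOn_C isOpen_Ioo hx).1

lemma hasDerivAt_deriv_C : HasDerivAt (deriv f.C) (deriv (deriv f.C) x) x :=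
  (hasDerivAt_of_contDiffOn_two hf.contDiffOn_C isOpen_Ioo hx).2

lemma hasDerivAt_deriv_W :
    HasDerivAt (deriv f.W) (-(f.U x * deriv f.W x / (1 - x ^ 2))) x :=
  (hasDerivAt_of_contDiffOn_two hf.contDiffOn_W isOpen_Ioo hx).2.congr_deriv
    (eq_neg_of_add_eq_zero_left (hf.angular x hx))

lemma deriv_incompressible :
    (1 - x ^ 2) * deriv (deriv f.C) x - 2 * x * deriv f.C x =
      deriv f.R x + f.C x + x * (deriv (deriv f.R) x + deriv f.C x) := by
  have hleft := (hasDerivAt_one_sub_sq x).mul (hf.hasDerivAt_deriv_C hx)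
  have hright := (hasDerivAt_id x).mul ((hf.hasDerivAt_deriv_R hx).add (hf.hasDerivAt_C hx))
  have heq : (fun x ↦ 1 - x ^ 2) * deriv f.C =ᶠ[𝓝 x] id * (deriv f.R + f.C) :=
    eventually_of_mem (isOpen_Ioo.mem_nhds hx) hf.incompressible
  have := (hleft.congr_of_eventuallyEq heq.symm).unique hright
  simp only [Pi.add_apply, id] at this
  linarith

lemma hasDerivAt_U : HasDerivAt f.U (f.V x) x :=
  (((hasDerivAt_id x).mul (hf.hasDerivAt_R hx)).sub
    ((hasDerivAt_one_sub_sq x).mul (hf.hasDerivAt_C hx))).congr_deriv <| by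
      simp only [V, id]
      linear_combination -hf.incompressible x hx

lemma hasDerivAt_V : HasDerivAt f.V (f.V' x) x :=
  ((hf.hasDerivAt_R hx).add ((hasDerivAt_id x).mul (hf.hasDerivAt_C hx))).congr_deriv <| by
    simp only [V', id]
    ring

lemma hasDerivAt_L : HasDerivAt f.L (f.K x) x :=
  ((((hasDerivAt_one_sub_sq x).mul (hf.hasDerivAt_V hx)).add
    (((hasDerivAt_id x).const_mul 2).mul (hf.hasDerivAt_U hx))).add
    (((hf.hasDerivAt_U hx).pow 2).div_const 2)).congr_deriv <| by
      simp only [K, id]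
      push_cast
      ring

lemma hasDerivAt_K (hh : h ≤ 1) : HasDerivAt f.K (-f.P Q x) x := by
  have hx2 : 1 - x ^ 2 ≠ 0 := by nlinarith [hx.1, hx.2]
  have hV' : HasDerivAt f.V' (deriv (deriv f.R) x + 2 * deriv f.C x + x * deriv (deriv f.C) x) x :=
    (((hf.hasDerivAt_deriv_R hx).add (hf.hasDerivAt_C hx)).add
      ((hasDerivAt_id x).mul (hf.hasDerivAt_deriv_C hx))).congr_deriv (by simp only [id]; ring)
  refine ((((hasDerivAt_one_sub_sq x).mul hV').add ((hf.hasDerivAt_U hx).const_mul 2)).add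
    ((hf.hasDerivAt_U hx).mul (hf.hasDerivAt_V hx))).congr_deriv ?_
  have hradial := hf.radial x hx
  have hdiv := hf.incompressible x hx
  simp only [radialForce, axialForce, P, U, V, V'] at hradial ⊢
  field_simp at hradial ⊢
  linear_combination hradial + 2 * (1 - x ^ 2) * hdiv

lemma hasDerivAt_P (hh : h ≤ 1) :
    HasDerivAt (f.P Q) (2 * (f.W x * deriv f.W x) / (1 - x ^ 2)) x := by
  have hx2 : 1 - x ^ 2 ≠ 0 := by nlinarith [hx.1, hx.2]
  refine ((((hf.polar x hx).const_mul 2).add ((((hf.hasDerivAt_U hx).pow 2).add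
    ((hf.hasDerivAt_W hx).pow 2)).div (hasDerivAt_one_sub_sq x) hx2)).sub
    ((hf.hasDerivAt_V hx).const_mul 2)).congr_deriv ?_
  have hdiv := hf.incompressible x hx
  have hdiv' := hf.deriv_incompressible hx
  simp only [radialForce, axialForce, U, V, V', Pi.add_apply, Pi.pow_apply]
  push_cast
  field_simp
  linear_combination (1 - x ^ 2) ^ 2 * hdiv' +
    (1 - x ^ 2) * (x * f.R x - (1 - x ^ 2) * f.C x) * hdiv

end SolvesNS

lemma SolvesNS.swirlSystem (hf : f.SolvesNS Q h) (hh : -1 < h) (hh1 : h ≤ 1) :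
    SwirlSystem (fun t ↦ f.U (-tanh t)) (fun t ↦ f.L (-tanh t)) (fun t ↦ f.K (-tanh t))
      (fun t ↦ f.P Q (-tanh t)) (fun t ↦ f.W (-tanh t)) (fun t ↦ deriv f.W (-tanh t)) := by
  have hmem : ∀ᶠ t in atTop, -tanh t ∈ Set.Ioo (-1) h :=
    (tendsto_tanh_atTop.neg.eventually_lt_const hh).mono fun t ht ↦
      ⟨neg_lt_neg (tanh_lt_one t), ht⟩
  have comp {g : ℝ → ℝ} {g' t : ℝ} (hg : HasDerivAt g g' (-tanh t)) :
      HasDerivAt (fun t ↦ g (-tanh t)) (-(g' / cosh t ^ 2)) t :=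
    (hg.comp t (hasDerivAt_tanh t).neg).congr_deriv (by ring)
  refine ⟨?_, ?_, ?_, ?_, ?_, ?_⟩ <;> filter_upwards [hmem] with t ht
  · refine (comp (hf.hasDerivAt_U ht)).congr_deriv ?_
    simp only [L, one_sub_neg_tanh_sq]
    ring
  · exact comp (hf.hasDerivAt_L ht)
  · exact (comp (hf.hasDerivAt_K ht hh1)).congr_deriv (by ring)
  · refine (comp (hf.hasDerivAt_P ht hh1)).congr_deriv ?_
    rw [one_sub_neg_tanh_sq]
    field_simp
  · exact comp (hf.hasDerivAt_W ht)
  · refine (comp (hf.hasDerivAt_deriv_W ht)).congr_deriv ?_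
    rw [one_sub_neg_tanh_sq]
    field_simp

open Asymptotics

variable (f) in
/-- The speed `|u|` on the unit sphere. -/
def speed (x : ℝ) : ℝ := √(f.V x ^ 2 + (f.U x ^ 2 + f.W x ^ 2) / (1 - x ^ 2))

lemma speed_mul_inv_cosh_sq_le (t : ℝ) : f.speed (-tanh t) * (cosh t)⁻¹ ^ 2 ≤
    ‖f.V (-tanh t) * (cosh t)⁻¹ ^ 2‖ + ‖f.U (-tanh t) * (cosh t)⁻¹‖ +
      ‖f.W (-tanh t) * (cosh t)⁻¹‖ := by
  have hc := cosh_pos t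
  have hle : f.speed (-tanh t) ≤ |f.V (-tanh t)| + |f.U (-tanh t)| * cosh t +
      |f.W (-tanh t)| * cosh t := by
    refine sqrt_le_iff.2 ⟨by positivity, ?_⟩
    rw [one_sub_neg_tanh_sq, div_div_eq_mul_div, div_one, ← sq_abs (f.V _), ← sq_abs (f.U _),
      ← sq_abs (f.W _)]
    have hVU : 0 ≤ |f.V (-tanh t)| * (|f.U (-tanh t)| * cosh t) := by positivity
    have hVW : 0 ≤ |f.V (-tanh t)| * (|f.W (-tanh t)| * cosh t) := by positivity
    have hUW : 0 ≤ (|f.U (-tanh t)| * cosh t) * (|f.W (-tanh t)| * cosh t) := by positivity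
    linarith
  calc f.speed (-tanh t) * (cosh t)⁻¹ ^ 2
      ≤ (|f.V (-tanh t)| + |f.U (-tanh t)| * cosh t + |f.W (-tanh t)| * cosh t) *
          (cosh t)⁻¹ ^ 2 := by gcongr
    _ = _ := by
      simp only [norm_mul, norm_eq_abs, abs_of_pos (inv_pos.2 hc), norm_pow]
      field_simp

lemma speed_mul_inv_cosh_sq_isBigO {b : ℝ} (hb : b < 1)
    (hV : (fun t ↦ f.V (-tanh t) * (cosh t)⁻¹ ^ 2) =O[atTop] fun t ↦ (t ^ 2)⁻¹)
    (hU : (fun t ↦ f.U (-tanh t)) =O[atTop] fun _ ↦ (1 : ℝ))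
    (hW : (fun t ↦ f.W (-tanh t)) =O[atTop] fun t ↦ exp (b * t)) :
    (fun t ↦ f.speed (-tanh t) * (cosh t)⁻¹ ^ 2) =O[atTop] fun t ↦ (t ^ 2)⁻¹ := by
  have hU' : (fun t ↦ f.U (-tanh t) * (cosh t)⁻¹) =O[atTop] fun t ↦ (t ^ 2)⁻¹ :=
    ((hU.mul inv_cosh_isBigO).congr_right fun _ ↦ one_mul _).trans
      (exp_mul_isBigO_inv_sq (by norm_num))
  have hW' : (fun t ↦ f.W (-tanh t) * (cosh t)⁻¹) =O[atTop] fun t ↦ (t ^ 2)⁻¹ :=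
    ((hW.mul inv_cosh_isBigO).congr_right fun t ↦ by rw [← exp_add, ← add_mul]).trans
      (exp_mul_isBigO_inv_sq (by linarith))
  exact .trans (.of_norm_le fun t ↦ (norm_of_nonneg (by unfold speed; positivity)).trans_le
    (speed_mul_inv_cosh_sq_le t)) ((hV.norm_left.add hU'.norm_left).add hW'.norm_left)

theorem SolvesNS.asymptotics (hf : f.SolvesNS Q h) (hh : -1 < h) (hh1 : h ≤ 1) :
    ∃ τ, Tendsto f.U (𝓝[>] (-1)) (𝓝 τ) ∧
      (fun x ↦ f.speed x * √(1 - x ^ 2) ^ 2 * log √(1 - x ^ 2) ^ 2) =O[𝓝[>] (-1)]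
        fun _ ↦ (1 : ℝ) := by
  obtain ⟨τ, hU, hL, b, hb, hW⟩ := (hf.swirlSystem hh hh1).asymptotics
  have hV : (fun t ↦ f.V (-tanh t) * (cosh t)⁻¹ ^ 2) =O[atTop] fun t ↦ (t ^ 2)⁻¹ :=
    hL.neg_left.congr_left fun t ↦ by
      simp only [L, one_sub_neg_tanh_sq]
      ring
  refine ⟨τ, (tendsto_map'_iff.2 hU).mono_left nhdsGT_neg_one_le_map_neg_tanh,
    .mono (isBigO_map.2 ?_) nhdsGT_neg_one_le_map_neg_tanh⟩
  have hspeed := speed_mul_inv_cosh_sq_isBigO hb hV (hU.isBigO_one ℝ) hW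
  refine (hspeed.mul log_inv_cosh_sq_isBigO).congr' (.of_forall fun t ↦ ?_) ?_
  · simp only [Function.comp_apply, sqrt_one_sub_neg_tanh_sq]
  · filter_upwards [eventually_ne_atTop 0] with t ht
    exact inv_mul_cancel₀ (pow_ne_zero 2 ht)

end Profile

section Jets

lemma pd_congr {f g : V3 → ℝ} {X : V3} (h : f =ᶠ[𝓝 X] g) (j : Fin 3) : pd j f X = pd j g X := by
  rw [pd, h.fderiv_eq, pd]

lemma lap3_congr {f g : V3 → ℝ} {X : V3} (h : f =ᶠ[𝓝 X] g) : lap3 f X = lap3 g X :=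
  Finset.sum_congr rfl fun j _ ↦
    pd_congr (h.eventuallyEq_nhds.mono fun _ hY ↦ pd_congr hY j) j

lemma pd_coord (i j : Fin 3) (X : V3) : pd j (fun Y ↦ Y i) X = e3 j i :=
  DFunLike.congr_fun (EuclideanSpace.proj (𝕜 := ℝ) i : V3 →L[ℝ] ℝ).fderiv (e3 j)

lemma pd_add {f g : V3 → ℝ} {X : V3} (hf : DifferentiableAt ℝ f X) (hg : DifferentiableAt ℝ g X)
    (j : Fin 3) : pd j (fun Y ↦ f Y + g Y) X = pd j f X + pd j g X := by
  simp [pd, fderiv_fun_add hf hg]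

lemma pd_mul {f g : V3 → ℝ} {X : V3} (hf : DifferentiableAt ℝ f X) (hg : DifferentiableAt ℝ g X)
    (j : Fin 3) : pd j (fun Y ↦ f Y * g Y) X = pd j f X * g X + f X * pd j g X := by
  simp only [pd, fderiv_fun_mul hf hg, add_apply, smul_apply, smul_eq_mul]
  ring

lemma pd_comp {φ : ℝ → ℝ} {f : V3 → ℝ} {X : V3} (hφ : DifferentiableAt ℝ φ (f X))
    (hf : DifferentiableAt ℝ f X) (j : Fin 3) :
    pd j (fun Y ↦ φ (f Y)) X = deriv φ (f X) * pd j f X := by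
  simp [pd, fderiv_fun_comp X hφ hf, mul_comm]

variable {E F : Type*} [NormedAddCommGroup E] [NormedSpace ℝ E] [NormedAddCommGroup F]
  [NormedSpace ℝ F]

lemma eventually_differentiableAt_of_contDiffAt {f : E → F} {X : E}
    (hf : ContDiffAt ℝ 2 f X) : ∀ᶠ Y in 𝓝 X, DifferentiableAt ℝ f Y :=
  (hf.eventually (by simp)).mono fun _ hY ↦ hY.differentiableAt (by simp)

lemma differentiableAt_fderiv_apply {f : E → F} {X : E} (hf : ContDiffAt ℝ 2 f X) (v : E) :
    DifferentiableAt ℝ (fun Y ↦ fderiv ℝ f Y v) X :=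
  ((hf.fderiv_right (m := 1) (by norm_num)).differentiableAt (by simp)).clm_apply
    (differentiableAt_const _)

lemma differentiableAt_pd {f : V3 → ℝ} {X : V3} (hf : ContDiffAt ℝ 2 f X) (j : Fin 3) :
    DifferentiableAt ℝ (pd j f) X :=
  differentiableAt_fderiv_apply hf (e3 j)

/-- The function `f` is twice continuously differentiable near `X`, with gradient `g` and
Laplacian `l` at `X`. -/
structure HasJet (f : V3 → ℝ) (g : Fin 3 → ℝ) (l : ℝ) (X : V3) : Prop where
  contDiffAt : ContDiffAt ℝ 2 f X
  pd_eq : ∀ j, pd j f X = g j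
  lap3_eq : lap3 f X = l

namespace HasJet

variable {f₁ f₂ : V3 → ℝ} {g₁ g₂ g : Fin 3 → ℝ} {l₁ l₂ l : ℝ} {X : V3}

lemma congr_jet (h : HasJet f₁ g₁ l₁ X) (hg : g₁ = g) (hl : l₁ = l) : HasJet f₁ g l X :=
  hg ▸ hl ▸ h

lemma differentiableAt (h : HasJet f₁ g₁ l₁ X) : DifferentiableAt ℝ f₁ X :=
  h.contDiffAt.differentiableAt (by simp)

lemma coord (i : Fin 3) (X : V3) : HasJet (fun Y ↦ Y i) (fun j ↦ e3 j i) 0 X where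
  contDiffAt := by fun_prop
  pd_eq j := pd_coord i j X
  lap3_eq := by simp only [lap3, pd_coord]; simp [pd]

lemma add (h₁ : HasJet f₁ g₁ l₁ X) (h₂ : HasJet f₂ g₂ l₂ X) :
    HasJet (fun Y ↦ f₁ Y + f₂ Y) (g₁ + g₂) (l₁ + l₂) X where
  contDiffAt := h₁.contDiffAt.add h₂.contDiffAt
  pd_eq j := by
    rw [pd_add h₁.differentiableAt h₂.differentiableAt, h₁.pd_eq, h₂.pd_eq, Pi.add_apply]
  lap3_eq := by
    rw [← h₁.lap3_eq, ← h₂.lap3_eq, lap3, lap3, lap3, ← Finset.sum_add_distrib]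
    refine Finset.sum_congr rfl fun j _ ↦ ?_
    rw [← pd_add (differentiableAt_pd h₁.contDiffAt j) (differentiableAt_pd h₂.contDiffAt j)]
    refine pd_congr ?_ j
    filter_upwards [eventually_differentiableAt_of_contDiffAt h₁.contDiffAt,
      eventually_differentiableAt_of_contDiffAt h₂.contDiffAt] with Y hY₁ hY₂
    exact pd_add hY₁ hY₂ j

lemma mul (h₁ : HasJet f₁ g₁ l₁ X) (h₂ : HasJet f₂ g₂ l₂ X) :
    HasJet (fun Y ↦ f₁ Y * f₂ Y) (fun j ↦ g₁ j * f₂ X + f₁ X * g₂ j)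
      (l₁ * f₂ X + 2 * ∑ j, g₁ j * g₂ j + f₁ X * l₂) X where
  contDiffAt := h₁.contDiffAt.mul h₂.contDiffAt
  pd_eq j := by rw [pd_mul h₁.differentiableAt h₂.differentiableAt, h₁.pd_eq, h₂.pd_eq]
  lap3_eq := by
    rw [← h₁.lap3_eq, ← h₂.lap3_eq, lap3, lap3, lap3, Finset.sum_mul, Finset.mul_sum,
      Finset.mul_sum, ← Finset.sum_add_distrib, ← Finset.sum_add_distrib]
    refine Finset.sum_congr rfl fun j _ ↦ ?_
    have hpd : pd j (fun Y ↦ f₁ Y * f₂ Y) =ᶠ[𝓝 X]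
        fun Y ↦ pd j f₁ Y * f₂ Y + f₁ Y * pd j f₂ Y := by
      filter_upwards [eventually_differentiableAt_of_contDiffAt h₁.contDiffAt,
        eventually_differentiableAt_of_contDiffAt h₂.contDiffAt] with Y hY₁ hY₂
      exact pd_mul hY₁ hY₂ j
    have hd₁ := differentiableAt_pd h₁.contDiffAt j
    have hd₂ := differentiableAt_pd h₂.contDiffAt j
    rw [pd_congr hpd, pd_add (hd₁.fun_mul h₂.differentiableAt) (h₁.differentiableAt.fun_mul hd₂),
      pd_mul hd₁ h₂.differentiableAt, pd_mul h₁.differentiableAt hd₂, h₁.pd_eq, h₂.pd_eq]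
    ring

lemma sq (h : HasJet f₁ g₁ l₁ X) :
    HasJet (fun Y ↦ f₁ Y ^ 2) (fun j ↦ 2 * f₁ X * g₁ j) (2 * ∑ j, g₁ j ^ 2 + 2 * f₁ X * l₁) X := by
  simp only [pow_two]
  refine (h.mul h).congr_jet ?_ (by ring)
  ext j
  ring

lemma comp {φ : ℝ → ℝ} (h : HasJet f₁ g₁ l₁ X) (hφ : ContDiffAt ℝ 2 φ (f₁ X)) :
    HasJet (fun Y ↦ φ (f₁ Y)) (fun j ↦ deriv φ (f₁ X) * g₁ j)
      (deriv (deriv φ) (f₁ X) * ∑ j, g₁ j ^ 2 + deriv φ (f₁ X) * l₁) X where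
  contDiffAt := hφ.comp X h.contDiffAt
  pd_eq j := by
    rw [pd_comp (hφ.differentiableAt (by simp)) h.differentiableAt, h.pd_eq]
  lap3_eq := by
    rw [← h.lap3_eq, lap3, lap3, Finset.mul_sum, Finset.mul_sum, ← Finset.sum_add_distrib]
    refine Finset.sum_congr rfl fun j _ ↦ ?_
    have hpd : pd j (fun Y ↦ φ (f₁ Y)) =ᶠ[𝓝 X] fun Y ↦ deriv φ (f₁ Y) * pd j f₁ Y := by
      filter_upwards [h.differentiableAt.continuousAt.eventually
          (eventually_differentiableAt_of_contDiffAt hφ),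
        eventually_differentiableAt_of_contDiffAt h.contDiffAt] with Y hφY hY
      exact pd_comp hφY hY j
    have hφ' : DifferentiableAt ℝ (deriv φ) (f₁ X) :=
      differentiableAt_fderiv_apply hφ 1
    rw [pd_congr hpd,
      pd_mul (hφ'.fun_comp' X h.differentiableAt) (differentiableAt_pd h.contDiffAt j),
      pd_comp hφ' h.differentiableAt, h.pd_eq]
    ring

lemma sub (h₁ : HasJet f₁ g₁ l₁ X) (h₂ : HasJet f₂ g₂ l₂ X) :
    HasJet (fun Y ↦ f₁ Y - f₂ Y) (g₁ - g₂) (l₁ - l₂) X := by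
  simp only [sub_eq_add_neg]
  have hneg : deriv (fun s : ℝ ↦ -s) = fun _ ↦ -1 := deriv_neg'
  exact h₁.add ((h₂.comp contDiff_neg.contDiffAt).congr_jet (by ext; simp) (by simp [hneg]))

end HasJet

end Jets

section ConicalField

variable {X : V3}

lemma norm_sq_eq (X : V3) : ‖X‖ ^ 2 = X 0 ^ 2 + X 1 ^ 2 + X 2 ^ 2 := by
  simp [EuclideanSpace.real_norm_sq_eq, Fin.sum_univ_three]

lemma cylindrical_sq_of_norm_eq_one (hX : ‖X‖ = 1) : X 0 ^ 2 + X 1 ^ 2 = 1 - X 2 ^ 2 := by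
  have h := norm_sq_eq X
  rw [hX] at h
  linarith

lemma HasJet.cylindrical_sq (X : V3) :
    HasJet (fun Y ↦ Y 0 ^ 2 + Y 1 ^ 2) ![2 * X 0, 2 * X 1, 0] 4 X := by
  refine ((coord 0 X).sq.add (coord 1 X).sq).congr_jet ?_ ?_
  · ext j; fin_cases j <;> simp [e3]
  · simp only [e3, PiLp.single_apply, ite_pow, one_pow, zero_pow two_ne_zero, Finset.sum_ite_eq,
      Finset.mem_univ, ↓reduceIte]
    norm_num

lemma HasJet.norm_sq (X : V3) :
    HasJet (fun Y ↦ ‖Y‖ ^ 2) ![2 * X 0, 2 * X 1, 2 * X 2] 6 X := by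
  simp only [norm_sq_eq]
  refine ((cylindrical_sq X).add (coord 2 X).sq).congr_jet ?_ ?_
  · ext j; fin_cases j <;> simp [e3]
  · simp only [e3, PiLp.single_apply, ite_pow, one_pow, zero_pow two_ne_zero, Finset.sum_ite_eq,
      Finset.mem_univ, ↓reduceIte]
    norm_num

lemma deriv_deriv_inv (s : ℝ) : deriv (deriv Inv.inv) s = 2 * (s ^ 3)⁻¹ := by
  have h := congrFun (iter_deriv_inv' (𝕜 := ℝ) 2) s
  rw [Function.iterate_succ_apply, Function.iterate_one] at h
  rw [h]
  norm_num

lemma deriv_deriv_rpow_one (a : ℝ) : deriv (deriv fun s : ℝ ↦ s ^ a) 1 = a * (a - 1) := by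
  have h : (deriv fun s : ℝ ↦ s ^ a) = fun s ↦ a * s ^ (a - 1) :=
    funext fun s ↦ Real.deriv_rpow_const s a
  rw [h, deriv_const_mul_field]
  simp

lemma HasJet.inv_norm (hX : ‖X‖ = 1) : HasJet (fun Y ↦ ‖Y‖⁻¹) ![-X 0, -X 1, -X 2] 0 X := by
  have hpow (Y : V3) : ‖Y‖⁻¹ = (‖Y‖ ^ 2) ^ (-1 / 2 : ℝ) := by
    rw [← rpow_natCast, ← rpow_mul (norm_nonneg Y), ← rpow_neg_one]
    norm_num
  have hsq := norm_sq_eq X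
  simp only [hpow]
  refine ((norm_sq X).comp (φ := fun s ↦ s ^ (-1 / 2 : ℝ))
    (contDiffAt_rpow_const_of_ne (by simp [hX]))).congr_jet ?_ ?_
  · ext j; fin_cases j <;> simp [hX] <;> ring
  · simp only [hX, one_pow, deriv_deriv_rpow_one, Real.deriv_rpow_const, one_rpow, mul_one,
      Fin.sum_univ_three, Matrix.cons_val] at hsq ⊢
    linear_combination -3 * hsq

lemma HasJet.inv_cylindrical_sq (hX : X 0 ^ 2 + X 1 ^ 2 ≠ 0) :
    HasJet (fun Y ↦ (Y 0 ^ 2 + Y 1 ^ 2)⁻¹)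
      ![-2 * X 0 / (X 0 ^ 2 + X 1 ^ 2) ^ 2, -2 * X 1 / (X 0 ^ 2 + X 1 ^ 2) ^ 2, 0]
      (4 / (X 0 ^ 2 + X 1 ^ 2) ^ 2) X := by
  refine ((cylindrical_sq X).comp (contDiffAt_inv ℝ hX)).congr_jet ?_ ?_
  · ext j; fin_cases j <;> simp <;> ring
  · simp only [deriv_deriv_inv, deriv_inv, Fin.sum_univ_three]
    simp only [Matrix.cons_val]
    field_simp
    ring

lemma HasJet.cosine (hX : ‖X‖ = 1) :
    HasJet (fun Y ↦ Y 2 * ‖Y‖⁻¹) ![-X 2 * X 0, -X 2 * X 1, 1 - X 2 ^ 2] (-2 * X 2) X := by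
  refine ((coord 2 X).mul (inv_norm hX)).congr_jet ?_ ?_
  · ext j; fin_cases j <;> simp [e3, hX]; ring
  · simp [e3]

lemma HasJet.comp_cosine {φ : ℝ → ℝ} (hX : ‖X‖ = 1) (hφ : ContDiffAt ℝ 2 φ (X 2)) :
    HasJet (fun Y ↦ φ (Y 2 * ‖Y‖⁻¹))
      ![-deriv φ (X 2) * X 2 * X 0, -deriv φ (X 2) * X 2 * X 1, deriv φ (X 2) * (1 - X 2 ^ 2)]
      (deriv (deriv φ) (X 2) * (1 - X 2 ^ 2) - 2 * X 2 * deriv φ (X 2)) X := by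
  have hsq := norm_sq_eq X
  rw [hX] at hsq
  have h := (cosine hX).comp (φ := φ) (by simpa [hX])
  simp only [hX, inv_one, mul_one] at h
  refine h.congr_jet ?_ ?_
  · ext j; fin_cases j <;> simp <;> ring
  · simp only [Fin.sum_univ_three, Matrix.cons_val]
    linear_combination -deriv (deriv φ) (X 2) * X 2 ^ 2 * hsq

/-- The gradient of `Y ↦ Y i / (Y 0 ^ 2 + Y 1 ^ 2) * φ (Y 2 / ‖Y‖)` at a unit vector `X`, where
`a = φ (X 2)` and `b = φ' (X 2)`. -/
def horizontalGradient (i : Fin 3) (X : V3) (a b : ℝ) (j : Fin 3) : ℝ :=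
  (e3 j i / (1 - X 2 ^ 2) - 2 * X i * ![X 0, X 1, 0] j / (1 - X 2 ^ 2) ^ 2) * a +
    X i / (1 - X 2 ^ 2) * b * (e3 j 2 - X 2 * X j)

/-- The gradient of `Y ↦ φ (Y 2 / ‖Y‖) / ‖Y‖` at a unit vector `X`, where `a = φ (X 2)` and
`b = φ' (X 2)`. -/
def axialGradient (X : V3) (a b : ℝ) (j : Fin 3) : ℝ := b * (e3 j 2 - X 2 * X j) - X j * a

lemma HasJet.horizontal {i : Fin 3} {φ : ℝ → ℝ} (hi : i ≠ 2) (hX : ‖X‖ = 1)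
    (hρ : X 0 ^ 2 + X 1 ^ 2 ≠ 0) (hφ : ContDiffAt ℝ 2 φ (X 2)) :
    HasJet (fun Y ↦ Y i * (Y 0 ^ 2 + Y 1 ^ 2)⁻¹ * φ (Y 2 * ‖Y‖⁻¹))
      (horizontalGradient i X (φ (X 2)) (deriv φ (X 2))) (X i * deriv (deriv φ) (X 2)) X := by
  have hs : X 0 ^ 2 + X 1 ^ 2 = 1 - X 2 ^ 2 := cylindrical_sq_of_norm_eq_one hX
  refine (((coord i X).mul (inv_cylindrical_sq hρ)).mul (comp_cosine hX hφ)).congr_jet ?_ ?_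
  all_goals
    rw [hs] at hρ ⊢
    obtain rfl | rfl : i = 0 ∨ i = 1 := by omega
  iterate 2
    ext j
    fin_cases j <;> simp [horizontalGradient, e3, hX] <;> field_simp
    ring
  · simp only [Fin.sum_univ_three, e3, PiLp.single_apply, Fin.reduceEq, ↓reduceIte, Matrix.cons_val,
      hX, inv_one, zero_mul, one_mul]
    field_simp
    linear_combination 4 * X 0 * X 2 * deriv φ (X 2) * hs
  · simp only [Fin.sum_univ_three, e3, PiLp.single_apply, Fin.reduceEq, ↓reduceIte, Matrix.cons_val,
      hX, inv_one, zero_mul, one_mul]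
    field_simp
    linear_combination 4 * X 1 * X 2 * deriv φ (X 2) * hs

lemma HasJet.axial {φ : ℝ → ℝ} (hX : ‖X‖ = 1) (hφ : ContDiffAt ℝ 2 φ (X 2)) :
    HasJet (fun Y ↦ ‖Y‖⁻¹ * φ (Y 2 * ‖Y‖⁻¹)) (axialGradient X (φ (X 2)) (deriv φ (X 2)))
      (deriv (deriv φ) (X 2) * (1 - X 2 ^ 2) - 2 * X 2 * deriv φ (X 2)) X := by
  have hs := cylindrical_sq_of_norm_eq_one hX
  refine ((inv_norm hX).mul (comp_cosine hX hφ)).congr_jet ?_ ?_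
  · ext j
    fin_cases j <;> simp [axialGradient, e3, hX] <;> ring
  · simp only [Fin.sum_univ_three, hX, inv_one, Matrix.cons_val]
    linear_combination 2 * X 2 * deriv φ (X 2) * hs

namespace Profile

variable (f : Profile)

/-- The axisymmetric vector field, homogeneous of degree `-1`, with profile `f`. -/
def field (X : V3) : V3 :=
  !₂[X 0 * (X 0 ^ 2 + X 1 ^ 2)⁻¹ * f.R (X 2 * ‖X‖⁻¹) -
      X 1 * (X 0 ^ 2 + X 1 ^ 2)⁻¹ * f.W (X 2 * ‖X‖⁻¹),
    X 1 * (X 0 ^ 2 + X 1 ^ 2)⁻¹ * f.R (X 2 * ‖X‖⁻¹) +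
      X 0 * (X 0 ^ 2 + X 1 ^ 2)⁻¹ * f.W (X 2 * ‖X‖⁻¹),
    ‖X‖⁻¹ * f.C (X 2 * ‖X‖⁻¹)]

variable {f} {p : V3 → ℝ}

lemma field_zero_of_norm_eq_one (hX : ‖X‖ = 1) :
    f.field X 0 = (X 0 * f.R (X 2) - X 1 * f.W (X 2)) / (1 - X 2 ^ 2) := by
  simp only [field, cylindrical_sq_of_norm_eq_one hX, hX, inv_one, mul_one, PiLp.toLp_apply,
    Matrix.cons_val]
  ring

lemma field_one_of_norm_eq_one (hX : ‖X‖ = 1) :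
    f.field X 1 = (X 1 * f.R (X 2) + X 0 * f.W (X 2)) / (1 - X 2 ^ 2) := by
  simp only [field, cylindrical_sq_of_norm_eq_one hX, hX, inv_one, mul_one, PiLp.toLp_apply,
    Matrix.cons_val]
  ring

lemma field_two_of_norm_eq_one (hX : ‖X‖ = 1) : f.field X 2 = f.C (X 2) := by
  simp [field, hX]

lemma field_horizontal_inner (hX : ‖X‖ = 1) (hρ : X 0 ^ 2 + X 1 ^ 2 ≠ 0) :
    f.field X 0 * X 0 + f.field X 1 * X 1 = f.R (X 2) := by
  have hs := cylindrical_sq_of_norm_eq_one hX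
  rw [hs] at hρ
  rw [field_zero_of_norm_eq_one hX, field_one_of_norm_eq_one hX]
  field_simp
  linear_combination f.R (X 2) * hs

lemma sum_field_mul_horizontalGradient (hX : ‖X‖ = 1) (hρ : X 0 ^ 2 + X 1 ^ 2 ≠ 0) (i : Fin 3)
    (a b : ℝ) : ∑ j, f.field X j * horizontalGradient i X a b j =
      (f.field X i / (1 - X 2 ^ 2) - 2 * X i * f.R (X 2) / (1 - X 2 ^ 2) ^ 2) * a -
        X i / (1 - X 2 ^ 2) * b * f.U (X 2) := by
  have hsum : ∑ j, f.field X j * horizontalGradient i X a b j =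
      (f.field X i / (1 - X 2 ^ 2) -
        2 * X i * (f.field X 0 * X 0 + f.field X 1 * X 1) / (1 - X 2 ^ 2) ^ 2) * a +
      X i / (1 - X 2 ^ 2) * b *
        (f.field X 2 - X 2 * (f.field X 0 * X 0 + f.field X 1 * X 1 + f.field X 2 * X 2)) := by
    fin_cases i <;> simp [horizontalGradient, Fin.sum_univ_three, e3] <;> ring
  rw [hsum, field_horizontal_inner hX hρ, field_two_of_norm_eq_one hX, U]
  ring

lemma sum_field_mul_axialGradient (hX : ‖X‖ = 1) (hρ : X 0 ^ 2 + X 1 ^ 2 ≠ 0) (a b : ℝ) :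
    ∑ j, f.field X j * axialGradient X a b j = -(b * f.U (X 2)) - f.V (X 2) * a := by
  have hsum : ∑ j, f.field X j * axialGradient X a b j =
      b * (f.field X 2 -
        X 2 * (f.field X 0 * X 0 + f.field X 1 * X 1 + f.field X 2 * X 2)) -
      (f.field X 0 * X 0 + f.field X 1 * X 1 + f.field X 2 * X 2) * a := by
    simp only [axialGradient, Fin.sum_univ_three, e3, PiLp.single_apply, Fin.reduceEq, ↓reduceIte]
    ring
  rw [hsum, field_horizontal_inner hX hρ, field_two_of_norm_eq_one hX, U, V]
  ring

lemma hasJet_field_zero (hX : ‖X‖ = 1) (hρ : X 0 ^ 2 + X 1 ^ 2 ≠ 0)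
    (hR : ContDiffAt ℝ 2 f.R (X 2)) (hW : ContDiffAt ℝ 2 f.W (X 2)) :
    HasJet (fun Y ↦ f.field Y 0)
      (horizontalGradient 0 X (f.R (X 2)) (deriv f.R (X 2)) -
        horizontalGradient 1 X (f.W (X 2)) (deriv f.W (X 2)))
      (X 0 * deriv (deriv f.R) (X 2) - X 1 * deriv (deriv f.W) (X 2)) X :=
  (HasJet.horizontal (by decide) hX hρ hR).sub (HasJet.horizontal (by decide) hX hρ hW)

lemma hasJet_field_one (hX : ‖X‖ = 1) (hρ : X 0 ^ 2 + X 1 ^ 2 ≠ 0)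
    (hR : ContDiffAt ℝ 2 f.R (X 2)) (hW : ContDiffAt ℝ 2 f.W (X 2)) :
    HasJet (fun Y ↦ f.field Y 1)
      (horizontalGradient 1 X (f.R (X 2)) (deriv f.R (X 2)) +
        horizontalGradient 0 X (f.W (X 2)) (deriv f.W (X 2)))
      (X 1 * deriv (deriv f.R) (X 2) + X 0 * deriv (deriv f.W) (X 2)) X :=
  (HasJet.horizontal (by decide) hX hρ hR).add (HasJet.horizontal (by decide) hX hρ hW)

lemma hasJet_field_two (hX : ‖X‖ = 1) (hC : ContDiffAt ℝ 2 f.C (X 2)) :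
    HasJet (fun Y ↦ f.field Y 2) (axialGradient X (f.C (X 2)) (deriv f.C (X 2)))
      (deriv (deriv f.C) (X 2) * (1 - X 2 ^ 2) - 2 * X 2 * deriv f.C (X 2)) X :=
  HasJet.axial hX hC

lemma pd_zero_eq_of_nsEq_field (hX : ‖X‖ = 1) (hρ : X 0 ^ 2 + X 1 ^ 2 ≠ 0)
    (hR : ContDiffAt ℝ 2 f.R (X 2)) (hW : ContDiffAt ℝ 2 f.W (X 2))
    (hNS : NSEq f.field p X) :
    pd 0 p X = X 0 * f.radialForce (X 2) - X 1 * f.swirlForce (X 2) := by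
  have hu := hasJet_field_zero hX hρ hR hW
  have hmom := hNS.1 0
  simp only [hu.lap3_eq, hu.pd_eq, Pi.sub_apply, mul_sub, Finset.sum_sub_distrib,
    sum_field_mul_horizontalGradient hX hρ, field_zero_of_norm_eq_one hX,
    field_one_of_norm_eq_one hX] at hmom
  rw [cylindrical_sq_of_norm_eq_one hX] at hρ
  rw [radialForce, swirlForce]
  field_simp at hmom ⊢
  linear_combination hmom

lemma pd_one_eq_of_nsEq_field (hX : ‖X‖ = 1) (hρ : X 0 ^ 2 + X 1 ^ 2 ≠ 0)
    (hR : ContDiffAt ℝ 2 f.R (X 2)) (hW : ContDiffAt ℝ 2 f.W (X 2))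
    (hNS : NSEq f.field p X) :
    pd 1 p X = X 1 * f.radialForce (X 2) + X 0 * f.swirlForce (X 2) := by
  have hu := hasJet_field_one hX hρ hR hW
  have hmom := hNS.1 1
  simp only [hu.lap3_eq, hu.pd_eq, Pi.add_apply, mul_add, Finset.sum_add_distrib,
    sum_field_mul_horizontalGradient hX hρ, field_zero_of_norm_eq_one hX,
    field_one_of_norm_eq_one hX] at hmom
  rw [cylindrical_sq_of_norm_eq_one hX] at hρ
  rw [radialForce, swirlForce]
  field_simp at hmom ⊢
  linear_combination hmom

lemma pd_two_eq_of_nsEq_field (hX : ‖X‖ = 1) (hρ : X 0 ^ 2 + X 1 ^ 2 ≠ 0)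
    (hC : ContDiffAt ℝ 2 f.C (X 2)) (hNS : NSEq f.field p X) :
    pd 2 p X = f.axialForce (X 2) := by
  have hu := hasJet_field_two hX hC
  have hmom := hNS.1 2
  simp only [hu.lap3_eq, hu.pd_eq, sum_field_mul_axialGradient hX hρ] at hmom
  rw [axialForce]
  linear_combination hmom

lemma incompressible_of_nsEq_field (hX : ‖X‖ = 1) (hρ : X 0 ^ 2 + X 1 ^ 2 ≠ 0)
    (hR : ContDiffAt ℝ 2 f.R (X 2)) (hW : ContDiffAt ℝ 2 f.W (X 2))
    (hC : ContDiffAt ℝ 2 f.C (X 2)) (hNS : NSEq f.field p X) :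
    (1 - X 2 ^ 2) * deriv f.C (X 2) = X 2 * (deriv f.R (X 2) + f.C (X 2)) := by
  have hs := cylindrical_sq_of_norm_eq_one hX
  have hdiv := hNS.2
  rw [Fin.sum_univ_three, (hasJet_field_zero hX hρ hR hW).pd_eq,
    (hasJet_field_one hX hρ hR hW).pd_eq, (hasJet_field_two hX hC).pd_eq] at hdiv
  rw [hs] at hρ
  simp only [Pi.sub_apply, Pi.add_apply, horizontalGradient, axialGradient, e3, PiLp.single_apply,
    Fin.reduceEq, ↓reduceIte, Matrix.cons_val] at hdiv
  field_simp at hdiv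
  refine mul_left_cancel₀ (pow_ne_zero 2 hρ) ?_
  linear_combination hdiv +
    (2 * f.R (X 2) + X 2 * (1 - X 2 ^ 2) * deriv f.R (X 2)) * hs

end Profile

end ConicalField

section AxisymFlow

variable {h : ℝ} {X : V3} {u : V3 → V3} {p : V3 → ℝ} {φ x : ℝ}

/-- The open cone `-1 < cos θ < h` around the southern half of the axis. -/
def southCone (h : ℝ) : Set V3 := {X | X ≠ 0 ∧ X 2 * ‖X‖⁻¹ ∈ Set.Ioo (-1) h}

lemma isOpen_southCone : IsOpen (southCone h) := by
  have hcont : ContinuousOn (fun X : V3 ↦ X 2 * ‖X‖⁻¹) {0}ᶜ :=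
    ContinuousOn.mul (by fun_prop) (continuous_norm.continuousOn.inv₀ fun X hX ↦ by simpa using hX)
  exact hcont.isOpen_inter_preimage isOpen_compl_singleton isOpen_Ioo

lemma smul_mem_southCone {c : ℝ} (hc : 0 < c) (hX : X ∈ southCone h) : c • X ∈ southCone h := by
  refine ⟨smul_ne_zero hc.ne' hX.1, ?_⟩
  have heq : (c • X) 2 * ‖c • X‖⁻¹ = X 2 * ‖X‖⁻¹ := by
    rw [PiLp.smul_apply, smul_eq_mul, norm_smul, norm_of_nonneg hc.le]
    field_simp
  exact heq ▸ hX.2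

lemma mem_southCone_iff_of_norm_eq_one (hX : ‖X‖ = 1) :
    X ∈ southCone h ↔ X 2 ∈ Set.Ioo (-1) h := by
  have hX0 : X ≠ 0 := norm_ne_zero_iff.1 (by simp [hX])
  simp [southCone, hX0, hX]

lemma one_sub_sq_pos (hh : h ≤ 1) (hx : x ∈ Set.Ioo (-1) h) : 0 < 1 - x ^ 2 := by
  nlinarith [hx.1, hx.2]

/-- The point of the unit sphere with azimuth `φ` and third coordinate `x`. -/
def spherePoint (φ x : ℝ) : V3 := !₂[√(1 - x ^ 2) * cos φ, √(1 - x ^ 2) * sin φ, x]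

lemma norm_spherePoint (hx : 0 < 1 - x ^ 2) : ‖spherePoint φ x‖ = 1 := by
  rw [← sq_eq_sq₀ (norm_nonneg _) zero_le_one, norm_sq_eq]
  simp only [spherePoint, PiLp.toLp_apply, Matrix.cons_val, mul_pow, sq_sqrt hx.le]
  linear_combination (1 - x ^ 2) * sin_sq_add_cos_sq φ

lemma spherePoint_mem_southCone (hh : h ≤ 1) (hx : x ∈ Set.Ioo (-1) h) :
    spherePoint φ x ∈ southCone h :=
  (mem_southCone_iff_of_norm_eq_one (norm_spherePoint (one_sub_sq_pos hh hx))).2 hx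

lemma contDiffOn_sqrt_one_sub_sq (hh : h ≤ 1) :
    ContDiffOn ℝ 2 (fun x ↦ √(1 - x ^ 2)) (Set.Ioo (-1) h) :=
  ContDiffOn.sqrt (by fun_prop) fun x hx ↦ (one_sub_sq_pos hh hx).ne'

lemma contDiffOn_spherePoint (hh : h ≤ 1) : ContDiffOn ℝ 2 (spherePoint φ) (Set.Ioo (-1) h) := by
  refine contDiffOn_euclidean.2 fun i ↦ ?_
  fin_cases i
  · exact (contDiffOn_sqrt_one_sub_sq hh).mul contDiffOn_const
  · exact (contDiffOn_sqrt_one_sub_sq hh).mul contDiffOn_const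
  · exact contDiffOn_id

/-- The velocity `u` and the pressure `p` form an axisymmetric stationary Navier–Stokes flow on
`southCone h`, homogeneous of degrees `-1` and `-2`. -/
structure IsAxisymFlow (u : V3 → V3) (p : V3 → ℝ) (h : ℝ) : Prop where
  velocity_smul : ∀ X ∈ southCone h, ∀ c : ℝ, 0 < c → u (c • X) = c⁻¹ • u X
  pressure_smul : ∀ X ∈ southCone h, ∀ c : ℝ, 0 < c → p (c • X) = (c ^ 2)⁻¹ * p X
  contDiffOn_velocity : ContDiffOn ℝ 2 u (southCone h)
  contDiffOn_pressure : ContDiffOn ℝ 1 p (southCone h)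
  axisymOn : AxisymOn u (southCone h)
  nsEq : ∀ X ∈ southCone h, NSEq u p X

/-- The profile of a field, read off on the meridian `φ = 0` of the unit sphere. -/
def profileOf (u : V3 → V3) : Profile where
  R x := √(1 - x ^ 2) * u (spherePoint 0 x) 0
  W x := √(1 - x ^ 2) * u (spherePoint 0 x) 1
  C x := u (spherePoint 0 x) 2

namespace Profile

variable {f : Profile}

lemma field_smul {c : ℝ} (hc : 0 < c) (X : V3) : f.field (c • X) = c⁻¹ • f.field X := by
  have hcos : c * X 2 * (‖c • X‖)⁻¹ = X 2 * ‖X‖⁻¹ := by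
    rw [norm_smul, norm_of_nonneg hc.le]
    field_simp
  have hinv : (c ^ 2)⁻¹ * c = c⁻¹ := by field_simp
  ext i
  fin_cases i
  · simp only [field, Fin.zero_eta, PiLp.toLp_apply, PiLp.smul_apply, smul_eq_mul, mul_pow,
      ← mul_add, mul_inv, hcos, Matrix.cons_val_zero]
    rw [← hinv]
    ring
  · simp only [field, Fin.mk_one, PiLp.toLp_apply, PiLp.smul_apply, smul_eq_mul, mul_pow,
      ← mul_add, mul_inv, hcos, Matrix.cons_val_zero, Matrix.cons_val_one]
    rw [← hinv]
    ring
  · simp only [field, Fin.reduceFinMk, PiLp.toLp_apply, PiLp.smul_apply, smul_eq_mul, hcos,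
      Matrix.cons_val]
    rw [norm_smul, norm_of_nonneg hc.le]
    ring

end Profile

lemma rho_of_norm_eq_one (hX : ‖X‖ = 1) : rho X = √(1 - X 2 ^ 2) := by
  rw [rho, cylindrical_sq_of_norm_eq_one hX]

lemma uRc_of_norm_eq_one (hX : ‖X‖ = 1) :
    uRc u X = u X 0 * X 0 + u X 1 * X 1 + u X 2 * X 2 := by
  rw [uRc, hX, div_one]

lemma rho_mul_uTc (hX : ‖X‖ = 1) (hρ : 0 < 1 - X 2 ^ 2) : rho X * uTc u X =
    X 2 * (u X 0 * X 0 + u X 1 * X 1) - (1 - X 2 ^ 2) * u X 2 := by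
  have hs := sq_sqrt hρ.le
  rw [uTc, rho_of_norm_eq_one hX, hX]
  have hs0 := (sqrt_pos.2 hρ).ne'
  field_simp
  linear_combination -u X 2 * hs

lemma rho_mul_uPc (hX : ‖X‖ = 1) (hρ : 0 < 1 - X 2 ^ 2) :
    rho X * uPc u X = u X 1 * X 0 - u X 0 * X 1 := by
  rw [uPc, mul_div_cancel₀]
  · ring
  · exact rho_of_norm_eq_one hX ▸ (sqrt_pos.2 hρ).ne'

lemma fderiv_apply_eq_sum_pd (v : V3) : fderiv ℝ p X v = ∑ j, v j * pd j p X := by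
  have hv : v = ∑ j, v j • e3 j := by
    ext i
    fin_cases i <;> simp [Fin.sum_univ_three, e3]
  conv_lhs => rw [hv]
  simp only [map_sum, map_smul, smul_eq_mul, pd]

lemma hasDerivAt_comp_curve {γ : ℝ → V3} {γ' : V3} {t : ℝ} (hp : DifferentiableAt ℝ p (γ t))
    (hγ : ∀ j, HasDerivAt (fun s ↦ γ s j) (γ' j) t) :
    HasDerivAt (fun s ↦ p (γ s)) (∑ j, γ' j * pd j p (γ t)) t := by
  have hγ' : HasDerivAt γ γ' t :=
    (EuclideanSpace.equiv (Fin 3) ℝ).symm.hasFDerivAt.comp_hasDerivAt t (hasDerivAt_pi.2 hγ)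
  exact fderiv_apply_eq_sum_pd γ' ▸ hp.hasFDerivAt.comp_hasDerivAt t hγ'

lemma hasDerivAt_spherePoint_polar (hx : 0 < 1 - x ^ 2) (j : Fin 3) :
    HasDerivAt (fun x ↦ spherePoint φ x j)
      (!₂[-x / √(1 - x ^ 2) * cos φ, -x / √(1 - x ^ 2) * sin φ, 1] j) x := by
  have hsqrt : HasDerivAt (fun x ↦ √(1 - x ^ 2)) (-x / √(1 - x ^ 2)) x :=
    ((hasDerivAt_one_sub_sq x).sqrt hx.ne').congr_deriv (by ring)
  fin_cases j
  · exact hsqrt.mul_const _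
  · exact hsqrt.mul_const _
  · exact hasDerivAt_id x

lemma hasDerivAt_spherePoint_azimuth (j : Fin 3) :
    HasDerivAt (fun φ ↦ spherePoint φ x j)
      (!₂[-(√(1 - x ^ 2) * sin φ), √(1 - x ^ 2) * cos φ, 0] j) φ := by
  fin_cases j
  · simpa [spherePoint] using (hasDerivAt_cos φ).const_mul √(1 - x ^ 2)
  · exact (hasDerivAt_sin φ).const_mul _
  · exact hasDerivAt_const φ x

namespace IsAxisymFlow

variable (hu : IsAxisymFlow u p h)
include hu

lemma differentiableAt_pressure (hX : X ∈ southCone h) : DifferentiableAt ℝ p X :=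
  (hu.contDiffOn_pressure.contDiffAt (isOpen_southCone.mem_nhds hX)).differentiableAt (by simp)

lemma sum_mul_pd_pressure (hX : X ∈ southCone h) : ∑ j, X j * pd j p X = -2 * p X := by
  have hp : DifferentiableAt ℝ p ((1 : ℝ) • X) := by
    rw [one_smul]
    exact hu.differentiableAt_pressure hX
  have hcurve : HasDerivAt (fun c : ℝ ↦ p (c • X)) (∑ j, X j * pd j p ((1 : ℝ) • X)) 1 :=
    hasDerivAt_comp_curve hp fun j ↦ by simpa using (hasDerivAt_id (1 : ℝ)).mul_const (X j)
  have hpow : HasDerivAt (fun c : ℝ ↦ (c ^ 2)⁻¹ * p X) (-2 * p X) 1 := by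
    simpa using ((hasDerivAt_pow 2 (1 : ℝ)).fun_inv (by simp)).mul_const (p X)
  have heq : (fun c : ℝ ↦ p (c • X)) =ᶠ[𝓝 1] fun c ↦ (c ^ 2)⁻¹ * p X :=
    (eventually_gt_nhds zero_lt_one).mono (hu.pressure_smul X hX)
  simpa only [one_smul] using hcurve.unique (hpow.congr_of_eventuallyEq heq)

variable (hh : h ≤ 1)
include hh

lemma components_of_norm_eq_one (hX : ‖X‖ = 1) (hXh : X 2 ∈ Set.Ioo (-1) h) :
    u X 0 * X 0 + u X 1 * X 1 = (profileOf u).R (X 2) ∧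
      u X 1 * X 0 - u X 0 * X 1 = (profileOf u).W (X 2) ∧ u X 2 = (profileOf u).C (X 2) := by
  have hρ := one_sub_sq_pos hh hXh
  set Y := spherePoint 0 (X 2) with hYdef
  have hY : ‖Y‖ = 1 := norm_spherePoint hρ
  have hY0 : Y 0 = √(1 - X 2 ^ 2) := by simp [hYdef, spherePoint]
  have hY1 : Y 1 = 0 := by simp [hYdef, spherePoint]
  have hY2 : Y 2 = X 2 := rfl
  have hYρ : 0 < 1 - Y 2 ^ 2 := hρ
  obtain ⟨hr, ht, hp⟩ := hu.axisymOn X ((mem_southCone_iff_of_norm_eq_one hX).2 hXh) Y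
    (spherePoint_mem_southCone hh hXh) (hX.trans hY.symm) hY2.symm
  have hrho : rho X = rho Y := by rw [rho_of_norm_eq_one hX, rho_of_norm_eq_one hY, hY2]
  rw [uRc_of_norm_eq_one hX, uRc_of_norm_eq_one hY] at hr
  have hpolar : X 2 * (u X 0 * X 0 + u X 1 * X 1) - (1 - X 2 ^ 2) * u X 2 =
      Y 2 * (u Y 0 * Y 0 + u Y 1 * Y 1) - (1 - Y 2 ^ 2) * u Y 2 := by
    rw [← rho_mul_uTc hX hρ, ← rho_mul_uTc hY hYρ, ht, hrho]
  have hswirl : u X 1 * X 0 - u X 0 * X 1 = u Y 1 * Y 0 - u Y 0 * Y 1 := by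
    rw [← rho_mul_uPc hX hρ, ← rho_mul_uPc hY hYρ, hp, hrho]
  rw [hY0, hY1, hY2] at hr hpolar
  rw [hY0, hY1] at hswirl
  have hC : u X 2 = u Y 2 := by linear_combination X 2 * hr - hpolar
  rw [hC] at hr
  exact ⟨by simp only [profileOf]; linear_combination hr,
    by simp only [profileOf]; linear_combination hswirl, hC⟩

lemma eq_field_of_norm_eq_one (hX : ‖X‖ = 1) (hXh : X 2 ∈ Set.Ioo (-1) h) :
    u X = (profileOf u).field X := by
  obtain ⟨hR, hW, hC⟩ := hu.components_of_norm_eq_one hh hX hXh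
  have hρ := (one_sub_sq_pos hh hXh).ne'
  have hs := cylindrical_sq_of_norm_eq_one hX
  ext i
  fin_cases i
  · rw [Fin.zero_eta, Profile.field_zero_of_norm_eq_one hX, ← hR, ← hW, eq_div_iff hρ]
    linear_combination -u X 0 * hs
  · rw [Fin.mk_one, Profile.field_one_of_norm_eq_one hX, ← hR, ← hW, eq_div_iff hρ]
    linear_combination -u X 1 * hs
  · exact hC.trans (Profile.field_two_of_norm_eq_one hX).symm

lemma eqOn_field : Set.EqOn u (profileOf u).field (southCone h) := by
  intro X hX
  have hnorm := norm_pos_iff.2 hX.1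
  have hY : ‖‖X‖⁻¹ • X‖ = 1 := by rw [norm_smul, norm_inv, norm_norm, inv_mul_cancel₀ hnorm.ne']
  have hYmem : ‖X‖⁻¹ • X ∈ southCone h := smul_mem_southCone (inv_pos.2 hnorm) hX
  have hYh := (mem_southCone_iff_of_norm_eq_one hY).1 hYmem
  rw [← smul_inv_smul₀ hnorm.ne' X, hu.velocity_smul _ hYmem _ hnorm,
    Profile.field_smul hnorm, hu.eq_field_of_norm_eq_one hh hY hYh]

lemma nsEq_field (hX : X ∈ southCone h) : NSEq (profileOf u).field p X := by
  have heq : u =ᶠ[𝓝 X] (profileOf u).field :=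
    eventually_of_mem (isOpen_southCone.mem_nhds hX) (hu.eqOn_field hh)
  have hcoord (i : Fin 3) : (fun Y ↦ u Y i) =ᶠ[𝓝 X] fun Y ↦ (profileOf u).field Y i :=
    heq.fun_comp (· i)
  have hNS := hu.nsEq X hX
  simp only [NSEq, fun i ↦ lap3_congr (hcoord i), fun i j ↦ pd_congr (hcoord i) j,
    heq.eq_of_nhds] at hNS
  exact hNS

lemma contDiffOn_profileOf : ContDiffOn ℝ 2 (profileOf u).R (Set.Ioo (-1) h) ∧
    ContDiffOn ℝ 2 (profileOf u).W (Set.Ioo (-1) h) ∧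
    ContDiffOn ℝ 2 (profileOf u).C (Set.Ioo (-1) h) := by
  have hcomp := contDiffOn_euclidean.1 (hu.contDiffOn_velocity.comp
    (contDiffOn_spherePoint (φ := 0) hh) fun x hx ↦ spherePoint_mem_southCone hh hx)
  exact ⟨(contDiffOn_sqrt_one_sub_sq hh).mul (hcomp 0),
    (contDiffOn_sqrt_one_sub_sq hh).mul (hcomp 1), hcomp 2⟩

lemma pd_pressure_spherePoint (hx : x ∈ Set.Ioo (-1) h) (φ : ℝ) :
    pd 0 p (spherePoint φ x) = √(1 - x ^ 2) * cos φ * (profileOf u).radialForce x -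
        √(1 - x ^ 2) * sin φ * (profileOf u).swirlForce x ∧
      pd 1 p (spherePoint φ x) = √(1 - x ^ 2) * sin φ * (profileOf u).radialForce x +
        √(1 - x ^ 2) * cos φ * (profileOf u).swirlForce x ∧
      pd 2 p (spherePoint φ x) = (profileOf u).axialForce x ∧
      (1 - x ^ 2) * deriv (profileOf u).C x =
        x * (deriv (profileOf u).R x + (profileOf u).C x) := by
  have hx2 := one_sub_sq_pos hh hx
  have hnorm := norm_spherePoint (φ := φ) hx2
  have hρ : spherePoint φ x 0 ^ 2 + spherePoint φ x 1 ^ 2 ≠ 0 :=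
    (cylindrical_sq_of_norm_eq_one hnorm).trans_ne hx2.ne'
  have hnhds : Set.Ioo (-1) h ∈ 𝓝 (spherePoint φ x 2) := isOpen_Ioo.mem_nhds hx
  obtain ⟨hR, hW, hC⟩ := hu.contDiffOn_profileOf hh
  have hNS := hu.nsEq_field hh (spherePoint_mem_southCone (φ := φ) hh hx)
  exact ⟨Profile.pd_zero_eq_of_nsEq_field hnorm hρ (hR.contDiffAt hnhds) (hW.contDiffAt hnhds) hNS,
    Profile.pd_one_eq_of_nsEq_field hnorm hρ (hR.contDiffAt hnhds) (hW.contDiffAt hnhds) hNS,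
    Profile.pd_two_eq_of_nsEq_field hnorm hρ (hC.contDiffAt hnhds) hNS,
    Profile.incompressible_of_nsEq_field hnorm hρ (hR.contDiffAt hnhds) (hW.contDiffAt hnhds)
      (hC.contDiffAt hnhds) hNS⟩

lemma swirlForce_eq_zero (hx : x ∈ Set.Ioo (-1) h) : (profileOf u).swirlForce x = 0 := by
  have hx2 := one_sub_sq_pos hh hx
  have hderiv (φ : ℝ) : HasDerivAt (fun φ ↦ p (spherePoint φ x))
      ((1 - x ^ 2) * (profileOf u).swirlForce x) φ := by
    refine (hasDerivAt_comp_curve (γ := fun φ ↦ spherePoint φ x)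
      (hu.differentiableAt_pressure (spherePoint_mem_southCone hh hx))
      hasDerivAt_spherePoint_azimuth).congr_deriv ?_
    obtain ⟨h0, h1, -, -⟩ := hu.pd_pressure_spherePoint hh hx φ
    rw [Fin.sum_univ_three, h0, h1]
    simp only [Matrix.cons_val]
    linear_combination √(1 - x ^ 2) ^ 2 * (profileOf u).swirlForce x * sin_sq_add_cos_sq φ +
      (profileOf u).swirlForce x * sq_sqrt hx2.le
  obtain ⟨φ, -, hφ⟩ := exists_hasDerivAt_eq_zero two_pi_pos
    (fun φ _ ↦ (hderiv φ).continuousAt.continuousWithinAt) (by simp [spherePoint])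
    fun φ _ ↦ hderiv φ
  exact (mul_eq_zero.1 hφ).resolve_left hx2.ne'

theorem solvesNS_profileOf : (profileOf u).SolvesNS (fun x ↦ p (spherePoint 0 x)) h where
  contDiffOn_R := (hu.contDiffOn_profileOf hh).1
  contDiffOn_W := (hu.contDiffOn_profileOf hh).2.1
  contDiffOn_C := (hu.contDiffOn_profileOf hh).2.2
  incompressible x hx := (hu.pd_pressure_spherePoint hh hx 0).2.2.2
  radial x hx := by
    have hx2 := one_sub_sq_pos hh hx
    obtain ⟨h0, h1, h2, -⟩ := hu.pd_pressure_spherePoint hh hx 0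
    have heuler := hu.sum_mul_pd_pressure (spherePoint_mem_southCone (φ := 0) hh hx)
    rw [Fin.sum_univ_three, h0, h1, h2] at heuler
    simp only [spherePoint, PiLp.toLp_apply, Matrix.cons_val, cos_zero, sin_zero] at heuler ⊢
    linear_combination heuler - (profileOf u).radialForce x * sq_sqrt hx2.le
  polar x hx := by
    have hx2 := one_sub_sq_pos hh hx
    have hs := (sqrt_pos.2 hx2).ne'
    obtain ⟨h0, h1, h2, -⟩ := hu.pd_pressure_spherePoint hh hx 0
    refine (hasDerivAt_comp_curve
      (hu.differentiableAt_pressure (spherePoint_mem_southCone hh hx))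
      (hasDerivAt_spherePoint_polar hx2)).congr_deriv ?_
    rw [Fin.sum_univ_three, h0, h1, h2]
    simp only [Matrix.cons_val, cos_zero, sin_zero]
    field_simp
    ring
  angular x hx := hu.swirlForce_eq_zero hh hx

lemma rho_mul_uTc_eq (hX : ‖X‖ = 1) (hXh : X 2 ∈ Set.Ioo (-1) h) :
    rho X * uTc u X = (profileOf u).U (X 2) := by
  obtain ⟨hR, -, hC⟩ := hu.components_of_norm_eq_one hh hX hXh
  rw [rho_mul_uTc hX (one_sub_sq_pos hh hXh), hR, hC, Profile.U]

lemma norm_eq_speed (hX : ‖X‖ = 1) (hXh : X 2 ∈ Set.Ioo (-1) h) :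
    ‖u X‖ = (profileOf u).speed (X 2) := by
  obtain ⟨hR, hW, hC⟩ := hu.components_of_norm_eq_one hh hX hXh
  have hρ := (one_sub_sq_pos hh hXh).ne'
  have hs := cylindrical_sq_of_norm_eq_one hX
  rw [Profile.speed, Profile.U, Profile.V, ← hR, ← hW, ← hC,
    ← sqrt_sq (norm_nonneg (u X)), norm_sq_eq]
  congr 1
  field_simp
  linear_combination -(u X 0 ^ 2 + u X 1 ^ 2) * hs

end IsAxisymFlow

lemma dist_southPole_sq (hX : ‖X‖ = 1) : dist X S3 ^ 2 = 2 + 2 * X 2 := by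
  have hsq := norm_sq_eq X
  rw [hX] at hsq
  rw [dist_eq_norm, norm_sq_eq]
  simp only [S3, PiLp.sub_apply, PiLp.single_apply, Fin.reduceEq, ↓reduceIte]
  linear_combination -hsq

lemma neg_one_lt_coord_two (hX : ‖X‖ = 1) (hXS : X ≠ S3) : -1 < X 2 := by
  have hdist := pow_pos (dist_pos.2 hXS) 2
  rw [dist_southPole_sq hX] at hdist
  linarith

lemma tendsto_coord_two_nhdsWithin_southPole :
    Tendsto (fun X : V3 ↦ X 2) (𝓝[sphere2 \ {S3}] S3) (𝓝[>] (-1)) := by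
  have hcont : Tendsto (fun X : V3 ↦ X 2) (𝓝 S3) (𝓝 (-1)) := by
    simpa [S3] using (by fun_prop : Continuous fun X : V3 ↦ X 2).tendsto S3
  refine tendsto_nhdsWithin_iff.2 ⟨hcont.mono_left nhdsWithin_le_nhds, ?_⟩
  filter_upwards [self_mem_nhdsWithin] with X hX
  exact neg_one_lt_coord_two (by simpa [sphere2] using hX.1) hX.2

lemma southCone_subset_cone3 {δ : ℝ} (hδ : 0 < δ) (hh : h ≤ δ ^ 2 / 2 - 1) :
    southCone h ⊆ cone3 (NSCap δ) := by
  intro X hX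
  have hnorm := norm_pos_iff.2 hX.1
  have hY : ‖‖X‖⁻¹ • X‖ = 1 := by rw [norm_smul, norm_inv, norm_norm, inv_mul_cancel₀ hnorm.ne']
  have hYh := (mem_southCone_iff_of_norm_eq_one hY).1 (smul_mem_southCone (inv_pos.2 hnorm) hX)
  refine ⟨hX.1, ⟨by simpa [sphere2] using hY, ?_⟩, ?_⟩
  · refine (pow_lt_pow_iff_left₀ dist_nonneg hδ.le two_ne_zero).1 ?_
    rw [dist_southPole_sq hY]
    linarith [hYh.2]
  · rintro hYS
    have hlt := hYh.1
    rw [Set.mem_singleton_iff.1 hYS] at hlt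
    simp [S3] at hlt

lemma eventually_southPole_mem {h : ℝ} (hh : -1 < h) :
    ∀ᶠ X in 𝓝[sphere2 \ {S3}] S3, ‖X‖ = 1 ∧ X 2 ∈ Set.Ioo (-1) h := by
  filter_upwards [self_mem_nhdsWithin,
    tendsto_coord_two_nhdsWithin_southPole (Ioo_mem_nhdsGT hh)] with X hX hXh
  exact ⟨by simpa [sphere2] using hX.1, hXh⟩

theorem IsAxisymFlow.asymptotics (hu : IsAxisymFlow u p h) (hh : -1 < h) (hh1 : h ≤ 1) :
    ∃ τ : ℝ, Tendsto (fun X ↦ rho X * uTc u X) (𝓝[sphere2 \ {S3}] S3) (𝓝 τ) ∧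
      ∃ C : ℝ, ∀ᶠ X in 𝓝[sphere2 \ {S3}] S3, ‖u X‖ * rho X ^ 2 * log (rho X) ^ 2 ≤ C := by
  obtain ⟨τ, hU, hspeed⟩ := (hu.solvesNS_profileOf hh1).asymptotics hh hh1
  have hpole := tendsto_coord_two_nhdsWithin_southPole
  have hmem := eventually_southPole_mem hh
  obtain ⟨C, hC⟩ := (hspeed.comp_tendsto hpole).bound
  refine ⟨τ, (hU.comp hpole).congr' ?_, C, ?_⟩
  · filter_upwards [hmem] with X hX
    exact (hu.rho_mul_uTc_eq hh1 hX.1 hX.2).symm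
  · filter_upwards [hmem, hC] with X hX hXC
    rw [hu.norm_eq_speed hh1 hX.1 hX.2, rho_of_norm_eq_one hX.1]
    simpa using (le_abs_self _).trans hXC

end AxisymFlow

end ConicalNS

/-- existence of `τ = lim |x'| u_θ` and the bound `|u| = O(1/(|x'| ln|x'|)²)`. -/
theorem tau_exists_and_universal_bound (δ : ℝ) (hδ : 0 < δ) (u : V3 → V3) (p : V3 → ℝ)
    (hu_hom : ∀ x ∈ cone3 (NSCap δ), ∀ lam : ℝ, 0 < lam → u (lam • x) = lam⁻¹ • u x)
    (hp_hom : ∀ x ∈ cone3 (NSCap δ), ∀ lam : ℝ, 0 < lam → p (lam • x) = (lam ^ 2)⁻¹ * p x)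
    (hu_reg : ContDiffOn ℝ 2 u (cone3 (NSCap δ)))
    (hp_reg : ContDiffOn ℝ 1 p (cone3 (NSCap δ)))
    (haxi : AxisymOn u (cone3 (NSCap δ)))
    (hNS : ∀ x ∈ cone3 (NSCap δ), NSEq u p x) :
    ∃ τ : ℝ,
      Tendsto (fun x => rho x * uTc u x) (𝓝[sphere2 \ {S3}] S3) (𝓝 τ) ∧
      ∃ C : ℝ, ∀ᶠ x in 𝓝[sphere2 \ {S3}] S3,
        ‖u x‖ * (rho x) ^ 2 * (Real.log (rho x)) ^ 2 ≤ C := by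
  obtain ⟨h, hh, hh1, hhδ⟩ : ∃ h : ℝ, -1 < h ∧ h ≤ 1 ∧ h ≤ δ ^ 2 / 2 - 1 :=
    ⟨min 1 (δ ^ 2 / 2 - 1), lt_min (by norm_num) (by linarith [pow_pos hδ 2]), min_le_left _ _,
      min_le_right _ _⟩
  have hsub := ConicalNS.southCone_subset_cone3 hδ hhδ
  exact ConicalNS.IsAxisymFlow.asymptotics
    { velocity_smul := fun X hX ↦ hu_hom X (hsub hX)
      pressure_smul := fun X hX ↦ hp_hom X (hsub hX)
      contDiffOn_velocity := hu_reg.mono hsub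
      contDiffOn_pressure := hp_reg.mono hsub
      axisymOn := fun X hX Y hY ↦ haxi X (hsub hX) Y (hsub hY)
      nsEq := fun X hX ↦ hNS X (hsub hX) } hh hh1
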